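/- Let H be a finite abelian group with exponent exp(H) = m ≥ 2, let n be a positive integer with n ≥ 2m|H| + 2|H|, and let G = C_{mn} ⊕ H. Then for every integer k ≥ 2, s_{kmnℕ}(G) = kmn + D(G) − 1. -/

import Mathlib

/-- `T` is a 1-product sequence: its terms can be ordered so that their product is `1`. -/
def IsOneProdSeq {G : Type*} [Group G] (T : Multiset G) : Prop :=
  ∃ l : List G, (l : Multiset G) = T ∧ l.prod = 1

/-!
Let `C` be the subgroup of `m`-th multiples of the first summand, which is cyclic of order `n`,
contains `mG`, and has index `mh` with `h = |H|`. By pigeonhole, a sequence of length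
`kmn + D(G) - 1` splits into blocks of `m` terms from one coset of `C` with sum in `C`, up to a
bounded remainder, and it suffices to find `kn` blocks whose values sum to zero in `C`. Zero-sum
subsequences of length `mn` can be split off by the Erdős–Ginzburg–Ziv theorem, so only `k = 2`
matters.

Choose the grouping with the fewest nonconstant blocks and suppose the sequence of block values has
no zero-sum subsequence of length `2n`. Its length lies between about `5n/2` and `3n`, and counting
subset sums of differences of pairs of terms, with Kneser-type growth estimates, shows that it
consists of `a ≥ n` copies of one value `c`, a multiple of `n` copies of another value, and at most
`3n/2` exceptional terms.

If some block of value `c` is constant, say equal to `g` repeated `m` times, apply the definition of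
`D(G)` to the translates by `-g` of the remaining terms: this yields a long subsequence `P` with sum
`|P| g`, which is completed to length exactly `2mn` by blocks of value `c`, by multiples of `n`
equal blocks, and by single copies of `g`.

If all blocks of value `c` are nonconstant, `2h` of them pair up within cosets of `C`. By minimality
of the grouping, the terms of two such blocks match into `m` pairs of distinct terms, so exchanging
terms changes the sum by `mh` freely chosen nonzero elements of `C`. These additional differences
push the subset sums to all of `C`, which gives a zero-sum subsequence of length `2mn`.
-/

namespace ZeroSum

open AddAction
open scoped Classical Pointwise

section SubMultisets

variable {α β : Type*}

theorem exists_le_card_eq (s : Multiset α) {r : ℕ} (h : r ≤ s.card) : ∃ t ≤ s, t.card = r := by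
  obtain ⟨t, ht⟩ := Multiset.card_pos_iff_exists_mem.1
    ((Nat.choose_pos h).trans_eq (Multiset.card_powersetCard r s).symm)
  exact ⟨t, Multiset.mem_powersetCard.1 ht⟩

theorem exists_le_map_eq (f : α → β) {W : Multiset α} {P : Multiset β} (h : P ≤ W.map f) :
    ∃ P' ≤ W, P'.map f = P := by
  induction W using Multiset.induction_on generalizing P with
  | empty => exact ⟨0, le_rfl, (Multiset.le_zero.1 h).symm⟩
  | cons x W ih =>
    rw [Multiset.map_cons] at h
    by_cases hx : f x ∈ P
    · obtain ⟨P', hP', hm⟩ := ih (Multiset.erase_le_iff_le_cons.2 h)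
      exact ⟨x ::ₘ P', Multiset.cons_le_cons _ hP', by
        rw [Multiset.map_cons, hm, Multiset.cons_erase hx]⟩
    · obtain ⟨P', hP', hm⟩ := ih ((Multiset.le_cons_of_notMem hx).1 h)
      exact ⟨P', hP'.trans (Multiset.le_cons_self _ _), hm⟩

theorem exists_map_eq_of_map_eq_add {f : α → β} {W : Multiset α} {X Y : Multiset β}
    (h : W.map f = X + Y) : ∃ A B, A + B = W ∧ A.map f = X ∧ B.map f = Y := by
  obtain ⟨A, hA, rfl⟩ := exists_le_map_eq f (h ▸ Multiset.le_add_right X Y)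
  obtain ⟨B, rfl⟩ := Multiset.le_iff_exists_add.1 hA
  exact ⟨A, B, rfl, rfl, add_left_cancel ((Multiset.map_add f A B).symm.trans h)⟩

end SubMultisets

section SubsetSums

variable {C : Type*} [AddCommGroup C]

/-- `A` plus the set of all sums of (possibly empty) subsequences of `E`. Keeping the summand `A`
lets subset sums be accumulated one piece of a sequence at a time. -/
noncomputable def subsetSums (A : Finset C) (E : Multiset C) : Finset C :=
  A + (E.powerset.map Multiset.sum).toFinset

theorem mem_subsetSums {A : Finset C} {E : Multiset C} {x : C} :
    x ∈ subsetSums A E ↔ ∃ a ∈ A, ∃ F ≤ E, a + F.sum = x := by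
  simp [subsetSums, Finset.mem_add]

@[simp]
theorem subsetSums_zero (A : Finset C) : subsetSums A 0 = A := by
  ext x; simp [mem_subsetSums]

theorem subsetSums_cons (A : Finset C) (x : C) (E : Multiset C) :
    subsetSums A (x ::ₘ E) = subsetSums A E ∪ (x +ᵥ subsetSums A E) := by
  have hmap : (E.powerset.map fun F => (x ::ₘ F).sum).toFinset
      = x +ᵥ (E.powerset.map Multiset.sum).toFinset := by
    ext y
    simp [Finset.mem_vadd_finset]
  simp only [subsetSums, Multiset.powerset_cons, Multiset.map_add, Multiset.toFinset_add,
    Finset.add_union, Multiset.map_map, Function.comp_def, hmap, add_vadd_comm]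

theorem subsetSums_singleton (A : Finset C) (x : C) : subsetSums A {x} = A ∪ (x +ᵥ A) := by
  rw [← Multiset.cons_zero, subsetSums_cons, subsetSums_zero]

theorem subsetSums_add (A : Finset C) (E F : Multiset C) :
    subsetSums A (E + F) = subsetSums (subsetSums A E) F := by
  induction F using Multiset.induction_on with
  | empty => simp
  | cons x F ih => rw [Multiset.add_cons, subsetSums_cons, subsetSums_cons, ih]

@[gcongr]
theorem subsetSums_subset_subsetSums {A B : Finset C} {E F : Multiset C} (hAB : A ⊆ B)
    (hEF : E ≤ F) : subsetSums A E ⊆ subsetSums B F := by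
  intro x hx
  obtain ⟨a, ha, G, hG, rfl⟩ := mem_subsetSums.1 hx
  exact mem_subsetSums.2 ⟨a, hAB ha, G, hG.trans hEF, rfl⟩

theorem subset_subsetSums (A : Finset C) (E : Multiset C) : A ⊆ subsetSums A E := by
  simpa using subsetSums_subset_subsetSums (subset_refl A) (Multiset.zero_le E)

theorem subsetSums_subset_of_mem {A : Finset C} {E : Multiset C} {Q : AddSubgroup C}
    (hA : ∀ a ∈ A, a ∈ Q) (hE : ∀ e ∈ E, e ∈ Q) : ∀ x ∈ subsetSums A E, x ∈ Q := by
  intro x hx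
  obtain ⟨a, ha, F, hF, rfl⟩ := mem_subsetSums.1 hx
  exact Q.add_mem (hA a ha) (Q.multiset_sum_mem _ fun y hy => hE y (Multiset.mem_of_le hF hy))

theorem le_stabilizer_vadd {A : Finset C} {Q : AddSubgroup C} (h : Q ≤ stabilizer C A) (x : C) :
    Q ≤ stabilizer C (x +ᵥ A) := by
  intro q hq
  rw [mem_stabilizer_iff, vadd_comm, mem_stabilizer_iff.1 (h hq)]

theorem le_stabilizer_union {A B : Finset C} {Q : AddSubgroup C} (hA : Q ≤ stabilizer C A)
    (hB : Q ≤ stabilizer C B) : Q ≤ stabilizer C (A ∪ B) := by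
  intro q hq
  rw [mem_stabilizer_iff, Finset.vadd_finset_union, mem_stabilizer_iff.1 (hA hq),
    mem_stabilizer_iff.1 (hB hq)]

theorem le_stabilizer_subsetSums {A : Finset C} {Q : AddSubgroup C} (h : Q ≤ stabilizer C A)
    (E : Multiset C) : Q ≤ stabilizer C (subsetSums A E) := by
  induction E using Multiset.induction_on with
  | empty => rwa [subsetSums_zero]
  | cons x E ih =>
    rw [subsetSums_cons]
    exact le_stabilizer_union ih (le_stabilizer_vadd ih x)

theorem stabilizer_subsetSums_mono (A : Finset C) {E F : Multiset C} (h : E ≤ F) :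
    stabilizer C (subsetSums A E) ≤ stabilizer C (subsetSums A F) := by
  obtain ⟨D, rfl⟩ := Multiset.le_iff_exists_add.1 h
  rw [subsetSums_add]
  exact le_stabilizer_subsetSums le_rfl _

theorem subsetSums_eq_self {A : Finset C} {E : Multiset C} (h : ∀ x ∈ E, x ∈ stabilizer C A) :
    subsetSums A E = A := by
  induction E using Multiset.induction_on with
  | empty => exact subsetSums_zero A
  | cons x E ih =>
    rw [subsetSums_cons, ih fun y hy => h y (Multiset.mem_cons_of_mem hy),
      mem_stabilizer_iff.1 (h x (Multiset.mem_cons_self _ _)), Finset.union_self]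

section Growth

variable {A B : Finset C} {Q : AddSubgroup C}

theorem card_le_card_of_le_stabilizer (hA : Q ≤ stabilizer C A) (hne : A.Nonempty) :
    Nat.card Q ≤ A.card := by
  obtain ⟨a, ha⟩ := hne
  rw [← Nat.card_eq_finsetCard A]
  exact Nat.card_le_card_of_injective
    (fun q : Q => (⟨q + a, mem_stabilizer_finset'.1 (hA q.2) ha⟩ : A))
    fun q q' h => Subtype.ext (add_right_cancel (congrArg Subtype.val h))

theorem card_add_card_le_of_ssubset (hA : Q ≤ stabilizer C A) (hB : Q ≤ stabilizer C B)
    (hAB : A ⊂ B) : A.card + Nat.card Q ≤ B.card := by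
  have hBA : Q ≤ stabilizer C (B \ A) := fun q hq => by
    rw [mem_stabilizer_iff, Finset.vadd_finset_sdiff, mem_stabilizer_iff.1 (hA hq),
      mem_stabilizer_iff.1 (hB hq)]
  have hcard := card_le_card_of_le_stabilizer hBA (Finset.sdiff_nonempty.2 hAB.2)
  have := Finset.card_sdiff_add_card_eq_card hAB.1
  lia

theorem card_add_card_le_card_union_vadd (hA : Q ≤ stabilizer C A) {x : C}
    (hx : x ∉ stabilizer C A) : A.card + Nat.card Q ≤ (A ∪ (x +ᵥ A)).card := by
  refine card_add_card_le_of_ssubset hA (le_stabilizer_union hA (le_stabilizer_vadd hA x))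
    (Finset.subset_union_left.ssubset_of_ne fun h => hx ?_)
  exact mem_stabilizer_finset_iff_vadd_finset_subset.2 (Finset.union_eq_left.1 h.symm)

theorem exists_le_subsetSums_eq (hQ : Q ≤ stabilizer C A) (E : Multiset C) :
    ∃ E' ≤ E, subsetSums A E' = subsetSums A E ∧
      A.card + Nat.card Q * E'.card ≤ (subsetSums A E).card := by
  induction E using Multiset.induction_on with
  | empty => exact ⟨0, le_rfl, rfl, by simp⟩
  | cons x E ih =>
    obtain ⟨E', hE', hs, hc⟩ := ih
    by_cases hx : x ∈ stabilizer C (subsetSums A E)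
    · rw [subsetSums_cons, mem_stabilizer_iff.1 hx, Finset.union_self]
      exact ⟨E', hE'.trans (Multiset.le_cons_self _ _), hs, hc⟩
    · refine ⟨x ::ₘ E', Multiset.cons_le_cons _ hE', by rw [subsetSums_cons, subsetSums_cons, hs],
        ?_⟩
      have := card_add_card_le_card_union_vadd (le_stabilizer_subsetSums hQ E) hx
      rw [subsetSums_cons, Multiset.card_cons, mul_add, mul_one]
      lia

theorem card_add_mul_card_le_card_subsetSums (hQ : Q ≤ stabilizer C A) (E : Multiset C)
    (hE : ∀ x ∈ E, x ∉ stabilizer C (subsetSums A E)) :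
    A.card + Nat.card Q * E.card ≤ (subsetSums A E).card := by
  induction E using Multiset.induction_on with
  | empty => simp
  | cons x E ih =>
    have hm := stabilizer_subsetSums_mono A (Multiset.le_cons_self E x)
    have ih' := ih fun y hy h => hE y (Multiset.mem_cons_of_mem hy) (hm h)
    have hx : x ∉ stabilizer C (subsetSums A E) :=
      fun h => hE x (Multiset.mem_cons_self _ _) (hm h)
    have := card_add_card_le_card_union_vadd (le_stabilizer_subsetSums hQ E) hx
    rw [subsetSums_cons, Multiset.card_cons, mul_add, mul_one]
    lia

end Growth

/-- The easy case of Kneser's theorem, with two-element summands `{0, x}`. -/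
theorem mul_card_filter_le_card_subsetSums [Finite C] {A : Finset C} (hA : A.Nonempty)
    (E : Multiset C) {Q : AddSubgroup C} (hQ : stabilizer C (subsetSums A E) = Q) :
    Nat.card Q * ((E.filter (· ∉ Q)).card + 1) ≤ (subsetSums A E).card := by
  have := Fintype.ofFinite C
  set B := (Q : Set C).toFinset + A with hB
  have hBQ : Q ≤ stabilizer C B := fun q hq => by
    have hq' : q +ᵥ (Q : Set C).toFinset = (Q : Set C).toFinset :=
      mem_stabilizer_iff.1 (mem_stabilizer_finset'.2 fun x hx =>
        Set.mem_toFinset.2 (Q.add_mem hq (Set.mem_toFinset.1 hx)))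
    rw [mem_stabilizer_iff, hB, ← vadd_add_assoc, hq']
  have hAB : A ⊆ B := Finset.subset_add_right A (Set.mem_toFinset.2 Q.zero_mem)
  have hBE : subsetSums B (E.filter (· ∉ Q)) = subsetSums A E := by
    have hfilter : subsetSums B (E.filter (· ∉ Q)) = subsetSums B E := by
      conv_rhs => rw [← Multiset.filter_add_not (· ∉ Q) E]
      rw [subsetSums_add, subsetSums_eq_self (E := E.filter (¬ · ∉ Q))]
      exact fun x hx => le_stabilizer_subsetSums hBQ _ (not_not.1 (Multiset.mem_filter.1 hx).2)
    rw [hfilter]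
    refine Finset.Subset.antisymm ?_ (subsetSums_subset_subsetSums hAB le_rfl)
    rw [subsetSums, hB, add_assoc, ← subsetSums]
    rintro x hx
    obtain ⟨q, hq, y, hy, rfl⟩ := Finset.mem_add.1 hx
    exact mem_stabilizer_finset'.1 (hQ.ge (Set.mem_toFinset.1 hq)) hy
  have hgrowth := card_add_mul_card_le_card_subsetSums hBQ (E.filter (· ∉ Q)) fun x hx => by
    rw [hBE, hQ]
    exact (Multiset.mem_filter.1 hx).2
  have hcard := card_le_card_of_le_stabilizer hBQ (hA.mono hAB)
  rw [hBE] at hgrowth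
  rw [mul_add, mul_one]
  lia

theorem mul_card_filter_add_two_le_card [Fintype C] {A : Finset C} (hA : A.Nonempty)
    {E : Multiset C} {Q : AddSubgroup C} (hQ : stabilizer C (subsetSums A E) = Q)
    (hne : subsetSums A E ≠ Finset.univ) :
    Nat.card Q * ((E.filter (· ∉ Q)).card + 2) ≤ Nat.card C := by
  have h1 := mul_card_filter_le_card_subsetSums hA E hQ
  have h2 := card_add_card_le_of_ssubset hQ.ge (by rw [stabilizer_finset_univ]; exact le_top)
    (Finset.ssubset_univ_iff.2 hne)
  rw [Finset.card_univ, ← Nat.card_eq_fintype_card] at h2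
  rw [mul_add] at h1 ⊢
  lia

end SubsetSums

section NearPeriods

variable {C : Type*} [AddCommGroup C] {A B : Finset C} {x y : C}

/-- `d` is a near-period of `A` if translation by `d` moves at most one element of `A` out of
`A`. These are the steps along which sets of subset sums grow by at most one element. -/
def IsNearPeriod (A : Finset C) (d : C) : Prop :=
  {a | a ∈ A ∧ d + a ∉ A}.Subsingleton

theorem isNearPeriod_iff_card {d : C} :
    IsNearPeriod A d ↔ (A ∪ (d +ᵥ A)).card ≤ A.card + 1 := by
  have hd : (d +ᵥ A) \ A = d +ᵥ A.filter (d + · ∉ A) := by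
    ext z
    simp only [Finset.mem_sdiff, Finset.mem_vadd_finset, Finset.mem_filter, vadd_eq_add]
    aesop
  rw [← Finset.union_sdiff_self_eq_union, Finset.card_union_of_disjoint Finset.disjoint_sdiff, hd,
    Finset.card_vadd_finset, Nat.add_le_add_iff_left, Finset.card_le_one_iff_subsingleton]
  simp [IsNearPeriod]

theorem IsNearPeriod.neg {d : C} (h : IsNearPeriod A d) : IsNearPeriod A (-d) := by
  rw [isNearPeriod_iff_card] at h ⊢
  rwa [← Finset.card_vadd_finset d, Finset.vadd_finset_union, vadd_neg_vadd, Finset.union_comm]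

theorem exists_mem_add_notMem (hx : x ∉ stabilizer C A) : ∃ a ∈ A, x + a ∉ A := by
  rw [mem_stabilizer_finset'] at hx
  push Not at hx
  exact hx

theorem IsNearPeriod.sub_or_neg_sub (hx : IsNearPeriod A x) (hxA : x ∉ stabilizer C A)
    (hy : IsNearPeriod A y) (hy0 : y ≠ 0) : IsNearPeriod A (x - y) ∨ IsNearPeriod A (-x - y) := by
  -- `p` is the only point at which steps by `-x` leave `A`, and `p - y` is another point.
  obtain ⟨p, hp, hpx⟩ := exists_mem_add_notMem fun h => hxA (neg_mem_iff.1 h)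
  have hexit : -y + p ∉ A ∨ -x + (-y + p) ∈ A := by
    by_contra! h
    exact hy0 (by simpa using hx.neg h ⟨hp, hpx⟩)
  rcases hexit with h | h
  · left
    rintro a ⟨ha, hau⟩ b ⟨hb, hbu⟩
    have key : ∀ a ∈ A, x - y + a ∉ A → x + a ∉ A := by
      intro a ha hau hxa
      have hpa : x + a = p := hy.neg ⟨hxa, by rwa [← add_assoc, neg_add_eq_sub]⟩ ⟨hp, h⟩
      exact hpx (by rwa [← hpa, neg_add_cancel_left])
    exact hx ⟨ha, key a ha hau⟩ ⟨hb, key b hb hbu⟩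
  · right
    rintro a ⟨ha, hau⟩ b ⟨hb, hbu⟩
    have key : ∀ a ∈ A, -x - y + a ∉ A → -x + a ∈ A := by
      intro a ha hau
      by_contra hxa
      obtain rfl : a = p := hx.neg ⟨ha, hxa⟩ ⟨hp, hpx⟩
      exact hau (by rwa [sub_eq_add_neg, add_assoc])
    have hcomm : ∀ a, -x - y + a = -y + (-x + a) := fun a => by abel
    rw [hcomm] at hau hbu
    exact add_left_cancel (hy.neg ⟨key a ha (by rwa [hcomm]), hau⟩ ⟨key b hb (by rwa [hcomm]), hbu⟩)

theorem map_add_eq_of_map_cons_eq {B : Multiset C} {b₀ b₁ b₂ : C} (hx : x ≠ 0) (hb : b₁ ≠ b₂)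
    (h₁ : (b₀ ::ₘ B).map (x + ·) = b₁ ::ₘ B) (h₂ : (b₀ ::ₘ B).map (y + ·) = b₂ ::ₘ B) :
    B.map (y + ·) = B := by
  suffices hyb : y + b₀ = b₂ by
    rw [Multiset.map_cons, hyb] at h₂
    exact Multiset.cons_inj_right _ |>.1 h₂
  -- Shift the first relation by `y`, the second by `x`, and cancel `B`.
  have hcomm : (y + b₁) ::ₘ B.map (y + ·) = (x + b₂) ::ₘ B.map (x + ·) := by
    rw [← Multiset.map_cons (y + ·), ← Multiset.map_cons (x + ·), ← h₁, ← h₂]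
    simp [Multiset.map_map, add_left_comm]
  have hcancel : ({y + b₁, x + b₀, b₂} : Multiset C) + B = {x + b₂, y + b₀, b₁} + B := by
    rw [Multiset.map_cons] at h₁ h₂
    simp only [Multiset.insert_eq_cons, Multiset.cons_add, Multiset.singleton_add, ← h₁, ← h₂]
    rw [Multiset.cons_swap _ (y + b₀), Multiset.cons_swap (y + b₁), Multiset.cons_swap (y + b₁),
      hcomm, Multiset.cons_swap (x + b₀), Multiset.cons_swap (x + b₂) (y + b₀),
      Multiset.cons_swap (x + b₂)]
  have hmem : b₂ ∈ ({x + b₂, y + b₀, b₁} : Multiset C) := by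
    rw [← add_right_cancel hcancel]
    simp
  simpa [hx, hb.symm, eq_comm] using hmem

theorem mem_stabilizer_of_subset_vadd (hcard : B.card + 1 = A.card) (hA : B ⊆ A)
    (hxA : B ⊆ x +ᵥ A) (hyA : B ⊆ y +ᵥ A) (hx : x ≠ 0) (hxy : x +ᵥ A ≠ y +ᵥ A) :
    y ∈ stabilizer C B := by
  have hcons : ∀ {A' : Finset C}, B ⊆ A' → A'.card = A.card → ∃ b, A' = insert b B ∧ b ∉ B := by
    intro A' h hc
    obtain ⟨b, hb, rfl⟩ := Finset.exists_eq_insert_iff.2 ⟨h, hcard.trans hc.symm⟩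
    exact ⟨b, rfl, hb⟩
  have hval : ∀ (d : C) (A' : Finset C), (d +ᵥ A').val = A'.val.map (d + ·) := fun d A' =>
    Finset.image_val_of_injOn (add_right_injective d).injOn
  obtain ⟨b₀, h₀, hb₀⟩ := hcons hA rfl
  obtain ⟨b₁, h₁, hb₁⟩ := hcons hxA (Finset.card_vadd_finset _ _)
  obtain ⟨b₂, h₂, hb₂⟩ := hcons hyA (Finset.card_vadd_finset _ _)
  have hmap : ∀ {d b : C}, d +ᵥ A = insert b B → b ∉ B →
      (b₀ ::ₘ B.val).map (d + ·) = b ::ₘ B.val := by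
    intro d b h hb
    rw [← Finset.insert_val_of_notMem hb, ← Finset.insert_val_of_notMem hb₀, ← h, ← h₀, hval]
  refine Finset.val_injective ((hval y B).trans
    (map_add_eq_of_map_cons_eq hx ?_ (hmap h₁ hb₁) (hmap h₂ hb₂)))
  rintro rfl
  exact hxy (h₁.trans h₂.symm)

theorem stabilizer_compl [Fintype C] (A : Finset C) : stabilizer C Aᶜ = stabilizer C A := by
  ext d
  rw [mem_stabilizer_finset, mem_stabilizer_finset]
  simp only [Finset.mem_compl, not_iff_not]

theorem inter_subset_or_subset_union (hx : x ∉ stabilizer C A) (hy : IsNearPeriod A y)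
    (hxy : IsNearPeriod A (x - y)) : A ∩ (x +ᵥ A) ⊆ y +ᵥ A ∨ y +ᵥ A ⊆ A ∪ (x +ᵥ A) := by
  by_contra! h
  simp only [Finset.not_subset, Finset.mem_inter, Finset.mem_union, not_or,
    ← Finset.neg_vadd_mem_iff, vadd_eq_add] at h
  obtain ⟨⟨z, ⟨hz, hzx⟩, hzy⟩, w, hwy, hw, hwx⟩ := h
  obtain ⟨q, hq, hqx⟩ := exists_mem_add_notMem hx
  have hqy : -y + (x + q) ∈ A := by
    by_contra hqy
    have := hxy ⟨hq, by rwa [sub_eq_neg_add, add_assoc]⟩ ⟨hzx, by rwa [sub_eq_neg_add, add_assoc,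
      add_neg_cancel_left]⟩
    exact hqx (by rwa [this, add_neg_cancel_left])
  have hwq : w = x + q := add_left_cancel
    (hy ⟨hwy, by rwa [add_neg_cancel_left]⟩ ⟨hqy, by rwa [add_neg_cancel_left]⟩)
  exact hwx (by rwa [hwq, neg_add_cancel_left])

theorem card_union_vadd_of_isNearPeriod (hx : IsNearPeriod A x) (hxA : x ∉ stabilizer C A) :
    (A ∪ (x +ᵥ A)).card = A.card + 1 := by
  refine le_antisymm (isNearPeriod_iff_card.1 hx) ?_
  simpa using card_add_card_le_card_union_vadd (Q := ⊥) bot_le hxA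

theorem card_inter_vadd_of_isNearPeriod (hx : IsNearPeriod A x) (hxA : x ∉ stabilizer C A) :
    (A ∩ (x +ᵥ A)).card + 1 = A.card := by
  have := Finset.card_union_add_card_inter A (x +ᵥ A)
  rw [Finset.card_vadd_finset, card_union_vadd_of_isNearPeriod hx hxA] at this
  lia

theorem vadd_ne_vadd_of_stabilizer_eq_bot (hA : stabilizer C A = ⊥) (hxy : x ≠ y) :
    x +ᵥ A ≠ y +ᵥ A := by
  intro h
  have : -y + x ∈ stabilizer C A := by
    rw [mem_stabilizer_iff, add_vadd, h, neg_vadd_vadd]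
  rw [hA, AddSubgroup.mem_bot, neg_add_eq_zero] at this
  exact hxy this.symm

theorem IsNearPeriod.mem_stabilizer_inter_or_union [Finite C] (hA : stabilizer C A = ⊥)
    (hx : IsNearPeriod A x) (hy : IsNearPeriod A y) (hxy : IsNearPeriod A (x - y))
    (hx0 : x ≠ 0) (hy0 : y ≠ 0) (hne : x ≠ y) :
    (x ∈ stabilizer C (A ∩ (x +ᵥ A)) ∧ y ∈ stabilizer C (A ∩ (x +ᵥ A))) ∨
      (x ∈ stabilizer C (A ∪ (x +ᵥ A)) ∧ y ∈ stabilizer C (A ∪ (x +ᵥ A))) := by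
  have hxA : x ∉ stabilizer C A := by rwa [hA, AddSubgroup.mem_bot]
  have hyx := vadd_ne_vadd_of_stabilizer_eq_bot hA hne
  rcases inter_subset_or_subset_union hxA hy hxy with h | h
  · left
    have hcard := card_inter_vadd_of_isNearPeriod hx hxA
    exact ⟨mem_stabilizer_of_subset_vadd hcard Finset.inter_subset_left h
        Finset.inter_subset_right hy0 hyx.symm,
      mem_stabilizer_of_subset_vadd hcard Finset.inter_subset_left Finset.inter_subset_right h
        hx0 hyx⟩
  · right
    have := Fintype.ofFinite C
    have hcompl : ∀ d : C, d +ᵥ Aᶜ = (d +ᵥ A)ᶜ := fun d => by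
      ext z; simp [← Finset.neg_vadd_mem_iff]
    have hcard : (A ∪ (x +ᵥ A))ᶜ.card + 1 = Aᶜ.card := by
      have := card_union_vadd_of_isNearPeriod hx hxA
      have := Finset.card_add_card_compl A
      have := Finset.card_add_card_compl (A ∪ (x +ᵥ A))
      lia
    have hsub : ∀ {s : Finset C}, s ⊆ A ∪ (x +ᵥ A) → (A ∪ (x +ᵥ A))ᶜ ⊆ sᶜ :=
      fun h => Finset.compl_subset_compl.2 h
    rw [← stabilizer_compl (A ∪ _)]
    have hx' := hcompl x ▸ hsub Finset.subset_union_right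
    have hy' := hcompl y ▸ hsub h
    have hyx' : x +ᵥ Aᶜ ≠ y +ᵥ Aᶜ := by simpa [hcompl] using hyx
    exact ⟨mem_stabilizer_of_subset_vadd hcard (hsub Finset.subset_union_left) hy' hx' hy0
        hyx'.symm,
      mem_stabilizer_of_subset_vadd hcard (hsub Finset.subset_union_left) hx' hy' hx0 hyx'⟩

theorem stabilizer_ne_top [Fintype C] (hA : A.Nonempty) (hne : A ≠ Finset.univ) :
    stabilizer C A ≠ ⊤ := by
  intro h
  have := card_le_card_of_le_stabilizer h.ge hA
  rw [AddSubgroup.card_top, Nat.card_eq_fintype_card] at this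
  exact hne (Finset.card_eq_iff_eq_univ A |>.1 (le_antisymm A.card_le_univ this))

theorem IsNearPeriod.mem_stabilizer_or [Finite C] (hA : stabilizer C A = ⊥)
    (hx : IsNearPeriod A x) (hx0 : x ≠ 0) (hy : IsNearPeriod A y)
    (hne : ¬(y = 0 ∨ y = x ∨ y = -x)) :
    (x ∈ stabilizer C (A ∩ (x +ᵥ A)) ∧ y ∈ stabilizer C (A ∩ (x +ᵥ A))) ∨
      (x ∈ stabilizer C (A ∪ (x +ᵥ A)) ∧ y ∈ stabilizer C (A ∪ (x +ᵥ A))) := by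
  simp only [not_or] at hne
  obtain ⟨hy0, hyx, hyx'⟩ := hne
  rcases hx.sub_or_neg_sub (by rwa [hA, AddSubgroup.mem_bot]) hy hy0 with h | h
  · exact hx.mem_stabilizer_inter_or_union hA hy h hx0 hy0 (Ne.symm hyx)
  · have hstab : ∀ s : Finset C, stabilizer C (-x +ᵥ s) = stabilizer C s := fun s =>
      le_antisymm (by simpa only [vadd_neg_vadd] using
          le_stabilizer_vadd (le_refl (stabilizer C (-x +ᵥ s))) x)
        (le_stabilizer_vadd le_rfl _)
    have hinter : A ∩ (-x +ᵥ A) = -x +ᵥ (A ∩ (x +ᵥ A)) := by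
      rw [Finset.vadd_finset_inter, neg_vadd_vadd, Finset.inter_comm]
    have hunion : A ∪ (-x +ᵥ A) = -x +ᵥ (A ∪ (x +ᵥ A)) := by
      rw [Finset.vadd_finset_union, neg_vadd_vadd, Finset.union_comm]
    have := hx.neg.mem_stabilizer_inter_or_union hA hy h (neg_ne_zero.2 hx0) hy0 (Ne.symm hyx')
    rwa [hinter, hunion, hstab, hstab, neg_mem_iff, neg_mem_iff] at this

theorem IsNearPeriod.exists_notMem_notMem [Finite C] (hA : stabilizer C A = ⊥)
    {Q₁ Q₂ : AddSubgroup C} {z : C} (hy : IsNearPeriod A y) (hy₁ : y ∉ Q₁) (hy₂ : y ∈ Q₂)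
    (hz : IsNearPeriod A z) (hz₁ : z ∈ Q₁) (hz₂ : z ∉ Q₂) :
    ∃ d, IsNearPeriod A d ∧ d ∉ Q₁ ∧ d ∉ Q₂ := by
  have hy0 : y ≠ 0 := fun h => hy₁ (h ▸ Q₁.zero_mem)
  have hzA : z ∉ stabilizer C A := by
    rw [hA, AddSubgroup.mem_bot]
    exact fun h => hz₂ (h ▸ Q₂.zero_mem)
  rcases hz.sub_or_neg_sub hzA hy hy0 with h | h
  · exact ⟨_, h, fun h₁ => hy₁ (by simpa using sub_mem hz₁ h₁),
      fun h₂ => hz₂ (by simpa using add_mem h₂ hy₂)⟩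
  · exact ⟨_, h, fun h₁ => hy₁ (by simpa using sub_mem (neg_mem hz₁) h₁),
      fun h₂ => hz₂ (by simpa using add_mem h₂ hy₂)⟩

theorem isNearPeriod_subset_or_le [Finite C] (hA : stabilizer C A = ⊥) (hA2 : 2 ≤ A.card)
    (hAC : A.card + 2 ≤ Nat.card C) {R : Set C} (hR : ∀ d ∈ R, IsNearPeriod A d)
    (hxR : x ∈ R) (hx0 : x ≠ 0) :
    (∀ y ∈ R, y = 0 ∨ y = x ∨ y = -x) ∨ ∃ Q : AddSubgroup C, Q ≠ ⊤ ∧ ∀ y ∈ R, y ∈ Q := by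
  have := Fintype.ofFinite C
  rw [Nat.card_eq_fintype_card] at hAC
  have hx := hR x hxR
  have hxA : x ∉ stabilizer C A := by rwa [hA, AddSubgroup.mem_bot]
  have hcard₁ := card_inter_vadd_of_isNearPeriod hx hxA
  have hcard₂ := card_union_vadd_of_isNearPeriod hx hxA
  have hor := fun y hy => hx.mem_stabilizer_or hA hx0 (y := y) hy
  set I := A ∩ (x +ᵥ A)
  set U := A ∪ (x +ᵥ A)
  have hmem : ∀ {Q : AddSubgroup C} {y : C}, x ∈ Q → y ∉ Q → ¬(y = 0 ∨ y = x ∨ y = -x) := by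
    rintro Q y hx hy (rfl | rfl | rfl)
    exacts [hy Q.zero_mem, hy hx, hy (neg_mem hx)]
  by_contra! h
  obtain ⟨⟨w, hwR, hw⟩, hQ⟩ := h
  obtain ⟨y, hyR, hyI⟩ := hQ _ (stabilizer_ne_top (A := I) (Finset.card_pos.1 (by lia))
    fun h => by have := h ▸ Finset.card_univ (α := C); lia)
  obtain ⟨z, hzR, hzU⟩ := hQ _ (stabilizer_ne_top (A := U) (Finset.card_pos.1 (by lia))
    fun h => by have := h ▸ Finset.card_univ (α := C); lia)
  have hx' : x ∈ stabilizer C I ∧ x ∈ stabilizer C U := by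
    rcases hor w (hR w hwR) (by simpa using hw) with h | h
    · have := hor y (hR y hyR) (hmem h.1 hyI); tauto
    · have := hor z (hR z hzR) (hmem h.1 hzU); tauto
  have hyU : y ∈ stabilizer C U := by have := hor y (hR y hyR) (hmem hx'.1 hyI); tauto
  have hzI : z ∈ stabilizer C I := by have := hor z (hR z hzR) (hmem hx'.2 hzU); tauto
  obtain ⟨d, hd, hdI, hdU⟩ :=
    IsNearPeriod.exists_notMem_notMem hA (hR y hyR) hyI hyU (hR z hzR) hzI hzU
  have := hor d hd (hmem hx'.1 hdI)
  tauto

end NearPeriods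

section SmallGrowth

theorem eq_univ_of_card_le {α : Type*} [Fintype α] {A : Finset α} (h : Nat.card α ≤ A.card) :
    A = Finset.univ :=
  Finset.eq_univ_of_card A (le_antisymm A.card_le_univ (by rwa [← Nat.card_eq_fintype_card]))

variable {C : Type*} [AddCommGroup C] {A : Finset C} {k : ℕ}

theorem union_vadd_eq_univ [Fintype C] (hA : A.card + 1 = Nat.card C) {x : C} (hx : x ≠ 0) :
    A ∪ (x +ᵥ A) = Finset.univ := by
  have hne : A ⊂ Finset.univ := Finset.ssubset_univ_iff.2 fun h => by
    rw [h, Finset.card_univ, ← Nat.card_eq_fintype_card] at hA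
    lia
  have hcard := card_add_card_le_of_ssubset le_rfl
    (by rw [stabilizer_finset_univ]; exact le_top) hne
  rw [Finset.card_univ, ← Nat.card_eq_fintype_card] at hcard
  have hbot : stabilizer C A = ⊥ := AddSubgroup.card_le_one_iff_eq_bot _ |>.1 (by lia)
  refine eq_univ_of_card_le (hA ▸ ?_)
  simpa using card_add_card_le_card_union_vadd (Q := ⊥) bot_le
    (show x ∉ stabilizer C A by rwa [hbot, AddSubgroup.mem_bot])

theorem steps_subset_or_le [Finite C] (hA : A.Nonempty) (hAC : A.card + 2 ≤ Nat.card C)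
    (hk : 2 * k ≤ A.card) {R : Set C} (hR : ∀ d ∈ R, (A ∪ (d +ᵥ A)).card < 2 * (k + 1))
    {x : C} (hxR : x ∈ R) (hx0 : x ≠ 0) :
    (∀ y ∈ R, y = 0 ∨ y = x ∨ y = -x) ∨ ∃ Q : AddSubgroup C, Q ≠ ⊤ ∧ ∀ y ∈ R, y ∈ Q := by
  have := Fintype.ofFinite C
  by_cases hbot : stabilizer C A = ⊥
  · have hgrowth := card_add_card_le_card_union_vadd (Q := ⊥) bot_le
      (show x ∉ stabilizer C A by rwa [hbot, AddSubgroup.mem_bot])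
    rw [AddSubgroup.card_bot] at hgrowth
    have := hR x hxR
    have := hA.card_pos
    refine isNearPeriod_subset_or_le hbot (by lia) hAC
      (fun d hd => isNearPeriod_iff_card.2 ?_) hxR hx0
    have := hR d hd
    lia
  · refine Or.inr ⟨stabilizer C A, stabilizer_ne_top hA fun h => ?_, fun y hy => ?_⟩
    · rw [h, Finset.card_univ, ← Nat.card_eq_fintype_card] at hAC
      lia
    · by_contra hyA
      have := card_add_card_le_card_union_vadd le_rfl hyA
      have := hR y hy
      have := AddSubgroup.one_lt_card_iff_ne_bot _ |>.2 hbot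
      lia

theorem differences_subset_or_sub_mem [Finite C] (hA : A.Nonempty)
    (hAC : A.card + 2 ≤ Nat.card C) (hk : 2 * k ≤ A.card) {V : Finset C}
    (hV : ∀ x ∈ V, ∀ y ∈ V, x ≠ y → (A ∪ ((y - x) +ᵥ A)).card < 2 * (k + 1))
    {v w : C} (hv : v ∈ V) (hw : w ∈ V) (hvw : v ≠ w) :
    (∀ y ∈ V, y = v ∨ y - v = w - v ∨ y - v = -(w - v)) ∨
      ∃ Q : AddSubgroup C, Q ≠ ⊤ ∧ ∃ c, ∀ x ∈ V, x - c ∈ Q := by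
  rcases steps_subset_or_le hA hAC hk (R := {d | ∃ y ∈ V, y ≠ v ∧ y - v = d})
    (by rintro _ ⟨y, hy, hyv, rfl⟩; exact hV v hv y hy hyv.symm)
    ⟨w, hw, hvw.symm, rfl⟩ (sub_ne_zero.2 hvw.symm) with h | ⟨Q, hQ, h⟩
  · refine Or.inl fun y hy => or_iff_not_imp_left.2 fun hyv => ?_
    exact (h _ ⟨y, hy, hyv, rfl⟩).resolve_left (sub_ne_zero.2 hyv)
  · refine Or.inr ⟨Q, hQ, v, fun y hy => ?_⟩
    by_cases hyv : y = v
    · simp [hyv]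
    · exact h _ ⟨y, hy, hyv, rfl⟩

theorem card_le_two_or_sub_mem [Finite C] (hA : A.Nonempty) (hAC : A.card + 2 ≤ Nat.card C)
    (hC : 4 ≤ Nat.card C) (hk : 2 * k ≤ A.card) {V : Finset C}
    (hV : ∀ x ∈ V, ∀ y ∈ V, x ≠ y → (A ∪ ((y - x) +ᵥ A)).card < 2 * (k + 1)) :
    V.card ≤ 2 ∨ ∃ Q : AddSubgroup C, Q ≠ ⊤ ∧ ∃ c, ∀ x ∈ V, x - c ∈ Q := by
  rw [or_iff_not_imp_left, not_le, Finset.two_lt_card]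
  rintro ⟨a, ha, b, hb, c, hc, hab, hac, hbc⟩
  rcases differences_subset_or_sub_mem hA hAC hk hV ha hb hab with h₁ | h; swap
  · exact h
  rcases differences_subset_or_sub_mem hA hAC hk hV hb ha hab.symm with h₂ | h; swap
  · exact h
  -- Three distinct elements related in this way form a coset of a subgroup of order 3.
  have hca : c - a = -(b - a) :=
    ((h₁ c hc).resolve_left hac.symm).resolve_left fun h => hbc (sub_left_injective h).symm
  have hcb : c - b = -(a - b) :=
    ((h₂ c hc).resolve_left hbc.symm).resolve_left fun h => hac (sub_left_injective h).symm
  have horder : 3 • (b - a) = 0 := calc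
    3 • (b - a) = -(a - b) - -(b - a) + (b - a) := by abel
    _ = (c - b) - (c - a) + (b - a) := by rw [hca, hcb]
    _ = 0 := by abel
  refine ⟨AddSubgroup.zmultiples (b - a), fun htop => ?_, a, fun y hy => ?_⟩
  · have := addOrderOf_le_of_nsmul_eq_zero (by norm_num) horder
    rw [← Nat.card_zmultiples, htop, AddSubgroup.card_top] at this
    lia
  · rcases h₁ y hy with rfl | h | h
    · simp
    · exact h ▸ AddSubgroup.mem_zmultiples _
    · exact h ▸ neg_mem (AddSubgroup.mem_zmultiples _)

end SmallGrowth

section Pairs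

variable {α β : Type*}

/-- The sequence of all entries of a sequence of pairs. -/
def entries (P : Multiset (α × α)) : Multiset α := P.map Prod.fst + P.map Prod.snd

@[simp]
theorem entries_zero : entries (0 : Multiset (α × α)) = 0 := rfl

theorem entries_add (P P' : Multiset (α × α)) : entries (P + P') = entries P + entries P' := by
  simp only [entries, Multiset.map_add, add_add_add_comm]

@[simp]
theorem entries_cons (p : α × α) (P : Multiset (α × α)) :
    entries (p ::ₘ P) = p.1 ::ₘ p.2 ::ₘ entries P := by
  rw [entries, Multiset.map_cons, Multiset.map_cons, Multiset.cons_add, Multiset.add_cons]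
  rfl

@[simp]
theorem card_entries (P : Multiset (α × α)) : (entries P).card = 2 * P.card := by
  simp only [entries, Multiset.card_add, Multiset.card_map, two_mul]

theorem entries_map_prodMk (c : α) (E : Multiset α) :
    entries (E.map (Prod.mk c)) = Multiset.replicate E.card c + E := by
  simp [entries, Multiset.map_map]

theorem mem_entries {P : Multiset (α × α)} {x : α} :
    x ∈ entries P ↔ ∃ p ∈ P, p.1 = x ∨ p.2 = x := by
  simp only [entries, Multiset.mem_add, Multiset.mem_map, ← exists_or, ← and_or_left]

theorem count_entries_le {P : Multiset (α × α)} (h : ∀ p ∈ P, p.1 ≠ p.2) (x : α) :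
    (entries P).count x ≤ P.card := by
  induction P using Multiset.induction_on with
  | empty => simp
  | cons p P ih =>
    have := ih fun q hq => h q (Multiset.mem_cons_of_mem hq)
    have := h p (Multiset.mem_cons_self p P)
    rw [entries_cons, Multiset.count_cons, Multiset.count_cons, Multiset.card_cons]
    split_ifs with h₁ h₂
    · exact absurd (h₂.symm.trans h₁) this
    all_goals lia

theorem exists_map_fst_eq_map_snd_eq {X : Multiset α} {Y : Multiset β} (h : X.card = Y.card) :
    ∃ P : Multiset (α × β), P.map Prod.fst = X ∧ P.map Prod.snd = Y := by
  induction X, Y using Quotient.inductionOn₂ with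
  | h l l' =>
    exact ⟨l.zip l', by simp [List.map_fst_zip (Nat.le_of_eq h)],
      by simp [List.map_snd_zip (Nat.le_of_eq h.symm)]⟩

theorem exists_eq_cons_cons {W : Multiset α} {x y : α} (hx : x ∈ W) (hy : y ∈ W) (h : x ≠ y) :
    ∃ V, W = x ::ₘ y ::ₘ V := by
  obtain ⟨V, rfl⟩ := Multiset.exists_cons_of_mem hx
  obtain ⟨V, rfl⟩ := Multiset.exists_cons_of_mem ((Multiset.mem_cons.1 hy).resolve_left h.symm)
  exact ⟨V, rfl⟩

theorem exists_card_le_two_mul_count {V : Multiset α} (hV : V ≠ 0) (h : V.toFinset.card ≤ 2) :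
    ∃ v, V.card ≤ 2 * V.count v := by
  by_contra! hlt
  have hsum : ∑ a ∈ V.toFinset, 2 * V.count a < ∑ _a ∈ V.toFinset, V.card :=
    Finset.sum_lt_sum_of_nonempty (Multiset.toFinset_nonempty.2 hV) fun a _ => hlt a
  rw [← Finset.mul_sum, Multiset.toFinset_sum_count_eq, Finset.sum_const, smul_eq_mul] at hsum
  have := Nat.mul_le_mul_right V.card h
  lia

end Pairs

section Differences

variable {C : Type*} [AddCommGroup C]

/-- The sequence of differences of a sequence of pairs. Exchanging the first entry of a pair for
the second one changes the sum of a sequence by the corresponding difference. -/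
def diffs (P : Multiset (C × C)) : Multiset C := P.map fun p => p.2 - p.1

@[simp]
theorem diffs_zero : diffs (0 : Multiset (C × C)) = 0 := rfl

theorem diffs_add (P P' : Multiset (C × C)) : diffs (P + P') = diffs P + diffs P' :=
  Multiset.map_add _ _ _

@[simp]
theorem diffs_cons (p : C × C) (P : Multiset (C × C)) :
    diffs (p ::ₘ P) = (p.2 - p.1) ::ₘ diffs P :=
  Multiset.map_cons _ _ _

theorem diffs_map_prodMk (c : C) (E : Multiset C) :
    diffs (E.map (Prod.mk c)) = E.map fun x => x - c :=
  Multiset.map_map _ _ _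

theorem exists_le_entries_sum_eq {P F : Multiset (C × C)} (h : F ≤ P) :
    ∃ U ≤ entries P, U.card = P.card ∧ U.sum = (P.map Prod.fst).sum + (diffs F).sum := by
  obtain ⟨R, rfl⟩ := Multiset.le_iff_exists_add.1 h
  refine ⟨F.map Prod.snd + R.map Prod.fst, ?_, by simp, ?_⟩
  · rw [entries, Multiset.map_add, Multiset.map_add, add_comm (F.map Prod.snd)]
    gcongr
    exacts [Multiset.le_add_left _ _, Multiset.le_add_right _ _]
  · simp only [diffs, Multiset.sum_add, Multiset.map_add, Multiset.sum_map_sub]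
    abel

theorem exists_le_card_eq_sum_eq {A : Finset C} {Z : Multiset C} {P : Multiset (C × C)}
    (hP : entries P ≤ Z) {τ : C} {r : ℕ} (hr : P.card ≤ r) (hrZ : r + P.card ≤ Z.card)
    (hA : ∀ x, x ∈ subsetSums A (diffs P)) :
    ∃ a ∈ A, ∃ T ≤ Z, T.card = r ∧ T.sum + a = τ := by
  obtain ⟨R, rfl⟩ := Multiset.le_iff_exists_add.1 hP
  rw [Multiset.card_add, card_entries] at hrZ
  obtain ⟨F, hF, hFc⟩ := exists_le_card_eq R (r := r - P.card) (by lia)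
  obtain ⟨a, ha, D, hD, hsum⟩ := mem_subsetSums.1 (hA (τ - F.sum - (P.map Prod.fst).sum))
  obtain ⟨D', hD', rfl⟩ := exists_le_map_eq _ hD
  obtain ⟨U, hU, hUc, hUs⟩ := exists_le_entries_sum_eq hD'
  refine ⟨a, ha, U + F, add_le_add hU hF, by rw [Multiset.card_add]; lia, ?_⟩
  rw [eq_sub_iff_add_eq, eq_sub_iff_add_eq] at hsum
  rw [Multiset.sum_add, hUs, diffs, ← hsum]
  abel

end Differences

section Greedy

variable {C : Type*} [AddCommGroup C]

theorem exists_subsetSums_growth_lt {A : Finset C} {e : ℕ} (g : ℕ) (hA : e ≤ A.card)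
    (D : Multiset C) :
    ∃ E F, E + F = D ∧ e + g * E.card ≤ (subsetSums A E).card ∧
      ∀ x ∈ F, (subsetSums A E ∪ (x +ᵥ subsetSums A E)).card < e + g * (E.card + 1) := by
  induction hD : D.card using Nat.strong_induction_on generalizing A D e with
  | _ r ih =>
  by_cases h : ∃ x ∈ D, e + g ≤ (A ∪ (x +ᵥ A)).card
  · obtain ⟨x, hx, hgrow⟩ := h
    obtain ⟨D, rfl⟩ := Multiset.exists_cons_of_mem hx
    obtain ⟨E, F, hEF, hE, hF⟩ := ih D.card (by rw [← hD, Multiset.card_cons]; lia) hgrow D rfl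
    have hsums : subsetSums A (x ::ₘ E) = subsetSums (A ∪ (x +ᵥ A)) E := by
      rw [← Multiset.singleton_add, subsetSums_add, subsetSums_singleton]
    refine ⟨x ::ₘ E, F, by rw [Multiset.cons_add, hEF], ?_, fun y hy => ?_⟩
    · rw [hsums, Multiset.card_cons]
      linarith
    · have := hF y hy
      rw [hsums, Multiset.card_cons]
      linarith
  · push Not at h
    exact ⟨0, D, zero_add D, by simpa, by simpa⟩

theorem exists_subsetSums_diffs_growth_lt {A : Finset C} {e : ℕ} (g : ℕ) (hA : e ≤ A.card)
    (W : Multiset C) :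
    ∃ P V, entries P + V = W ∧ (∀ p ∈ P, p.1 ≠ p.2) ∧
      e + g * P.card ≤ (subsetSums A (diffs P)).card ∧
      ∀ x ∈ V, ∀ y ∈ V, x ≠ y →
        (subsetSums A (diffs P) ∪ ((y - x) +ᵥ subsetSums A (diffs P))).card
          < e + g * (P.card + 1) := by
  induction hW : W.card using Nat.strong_induction_on generalizing A W e with
  | _ r ih =>
  by_cases h : ∃ x ∈ W, ∃ y ∈ W, x ≠ y ∧ e + g ≤ (A ∪ ((y - x) +ᵥ A)).card
  · obtain ⟨x, hx, y, hy, hxy, hgrow⟩ := h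
    obtain ⟨W, rfl⟩ := exists_eq_cons_cons hx hy hxy
    obtain ⟨P, V, hPV, hne, hP, hV⟩ :=
      ih W.card (by rw [← hW, Multiset.card_cons, Multiset.card_cons]; lia) hgrow W rfl
    have hsums : subsetSums A (diffs ((x, y) ::ₘ P))
        = subsetSums (A ∪ ((y - x) +ᵥ A)) (diffs P) := by
      rw [diffs_cons, ← Multiset.singleton_add, subsetSums_add, subsetSums_singleton]
    refine ⟨(x, y) ::ₘ P, V, by rw [entries_cons, Multiset.cons_add, Multiset.cons_add, hPV],
      Multiset.forall_mem_cons.2 ⟨hxy, hne⟩, ?_, fun v hv w hw hvw => ?_⟩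
    · rw [hsums, Multiset.card_cons]
      linarith
    · have := hV v hv w hw hvw
      rw [hsums, Multiset.card_cons]
      linarith
  · push Not at h
    exact ⟨0, W, by simp, by simp, by simpa, by simpa⟩

variable [Fintype C]

theorem exists_subsetSums_eq_univ_or_le {D : Multiset C} (hD : ∀ x ∈ D, x ≠ 0) :
    ∃ E F, E + F = D ∧ 2 * E.card ≤ Nat.card C + 1 ∧ (subsetSums {0} E = Finset.univ ∨
      (2 * E.card ≤ (subsetSums {0} E).card ∧ 2 * E.card ≤ Nat.card C ∧
        ((∃ x, ∀ y ∈ F, y = x ∨ y = -x) ∨ ∃ Q : AddSubgroup C, Q ≠ ⊤ ∧ ∀ y ∈ F, y ∈ Q))) := by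
  obtain ⟨E, F, rfl, hE, hF⟩ :=
    exists_subsetSums_growth_lt (A := ({0} : Finset C)) (e := 0) 2 (Nat.zero_le _) D
  simp only [zero_add] at hE hF
  have hF0 : ∀ y ∈ F, y ≠ 0 := fun y hy => hD y (Multiset.mem_add.2 (Or.inr hy))
  have hle := (subsetSums {0} E).card_le_univ
  rw [← Nat.card_eq_fintype_card] at hle
  rcases F.empty_or_exists_mem with rfl | ⟨x, hx⟩
  · exact ⟨E, 0, rfl, by lia, Or.inr ⟨hE, by lia, Or.inl ⟨0, by simp⟩⟩⟩
  rcases lt_or_ge (Nat.card C) ((subsetSums {0} E).card + 2) with hlt | hge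
  · by_cases hcard : (subsetSums {0} E).card + 1 = Nat.card C
    · obtain ⟨F, rfl⟩ := Multiset.exists_cons_of_mem hx
      exact ⟨x ::ₘ E, F, by simp, by rw [Multiset.card_cons]; lia,
        Or.inl (by rw [subsetSums_cons, union_vadd_eq_univ hcard (hF0 x hx)])⟩
    · exact ⟨E, F, rfl, by lia, Or.inl (eq_univ_of_card_le (by lia))⟩
  · have hne : (subsetSums {0} E).Nonempty := ⟨0, subset_subsetSums _ _ (by simp)⟩
    refine ⟨E, F, rfl, by lia, Or.inr ⟨hE, by lia, ?_⟩⟩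
    rcases steps_subset_or_le hne hge hE (R := {y | y ∈ F}) hF hx (hF0 x hx) with h | h
    · exact Or.inl ⟨x, fun y hy => (h y hy).resolve_left (hF0 y hy)⟩
    · exact Or.inr h

theorem exists_subsetSums_diffs_eq_univ_or_le {A : Finset C} (hA : A.Nonempty) {k : ℕ}
    (hk : 2 * k ≤ A.card) (hC : 4 ≤ Nat.card C) (W : Multiset C) :
    ∃ P V, entries P + V = W ∧ (∀ p ∈ P, p.1 ≠ p.2) ∧ 2 * (k + P.card) ≤ Nat.card C + 1 ∧
      (subsetSums A (diffs P) = Finset.univ ∨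
        (2 * (k + P.card) < Nat.card C ∧ (V.toFinset.card ≤ 2 ∨
          ∃ Q : AddSubgroup C, Q ≠ ⊤ ∧ ∃ c, ∀ x ∈ V, x - c ∈ Q))) := by
  obtain ⟨P, V, rfl, hP, hsum, hV⟩ := exists_subsetSums_diffs_growth_lt 2 hk W
  rw [← mul_add] at hsum
  have hle := (subsetSums A (diffs P)).card_le_univ
  rw [← Nat.card_eq_fintype_card] at hle
  rcases lt_or_ge (Nat.card C) ((subsetSums A (diffs P)).card + 2) with hlt | hge
  · by_cases hcard : (subsetSums A (diffs P)).card + 1 = Nat.card C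
    · by_cases hxy : ∃ x ∈ V, ∃ y ∈ V, x ≠ y
      · obtain ⟨x, hx, y, hy, hxy⟩ := hxy
        obtain ⟨V, rfl⟩ := exists_eq_cons_cons hx hy hxy
        refine ⟨(x, y) ::ₘ P, V, by simp, Multiset.forall_mem_cons.2 ⟨hxy, hP⟩,
          by rw [Multiset.card_cons]; lia, Or.inl ?_⟩
        rw [diffs_cons, subsetSums_cons, union_vadd_eq_univ hcard (sub_ne_zero.2 hxy.symm)]
      · push Not at hxy
        have hone : V.toFinset.card ≤ 1 := Finset.card_le_one.2 fun x hx y hy =>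
          hxy x (Multiset.mem_toFinset.1 hx) y (Multiset.mem_toFinset.1 hy)
        exact ⟨P, V, rfl, hP, by lia, Or.inr ⟨by lia, Or.inl (by lia)⟩⟩
    · exact ⟨P, V, rfl, hP, by lia, Or.inl (eq_univ_of_card_le (by lia))⟩
  · refine ⟨P, V, rfl, hP, by lia, Or.inr ⟨by lia, ?_⟩⟩
    simpa only [Multiset.mem_toFinset] using
      card_le_two_or_sub_mem (hA.mono (subset_subsetSums _ _)) hge hC hsum (V := V.toFinset) (by
        simpa only [Multiset.mem_toFinset, mul_add, add_assoc] using hV)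

end Greedy

section ErdosGinzburgZiv

variable {C : Type*} [AddCommGroup C]

theorem exists_le_card_eq_card_sum_eq_zero [IsAddCyclic C] {S : Multiset C}
    (hS : 2 * Nat.card C - 1 ≤ S.card) : ∃ T ≤ S, T.card = Nat.card C ∧ T.sum = 0 := by
  let e := zmodAddCyclicAddEquiv (inferInstance : IsAddCyclic C)
  obtain ⟨T, hT, hcard, hsum⟩ := ZMod.erdos_ginzburg_ziv_multiset (n := Nat.card C) (S.map e.symm)
    (by simpa using hS)
  obtain ⟨T', hT', rfl⟩ := exists_le_map_eq _ hT
  exact ⟨T', hT', by simpa using hcard,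
    e.symm.map_eq_zero_iff.1 ((map_multiset_sum e.symm T').trans hsum)⟩

theorem exists_le_card_eq_mul_card_sum_eq_zero [Finite C] [IsAddCyclic C] {S : Multiset C} (j : ℕ)
    (hS : j * Nat.card C + Nat.card C - 1 ≤ S.card) :
    ∃ T ≤ S, T.card = j * Nat.card C ∧ T.sum = 0 := by
  induction j generalizing S with
  | zero => exact ⟨0, Multiset.zero_le _, by simp⟩
  | succ j ih =>
    have : 0 < Nat.card C := Nat.card_pos
    rw [add_one_mul] at hS ⊢
    obtain ⟨T, hT, hcard, hsum⟩ := exists_le_card_eq_card_sum_eq_zero (S := S) (by lia)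
    obtain ⟨R, rfl⟩ := Multiset.le_iff_exists_add.1 hT
    rw [Multiset.card_add] at hS
    obtain ⟨T', hT', hcard', hsum'⟩ := ih (S := R) (by lia)
    exact ⟨T + T', add_le_add le_rfl hT', by rw [Multiset.card_add, hcard, hcard', add_comm],
      by rw [Multiset.sum_add, hsum, hsum', add_zero]⟩

theorem exists_le_card_eq_mul_card_sum_eq_zero_of_mem [Finite C] [IsAddCyclic C]
    (Q : AddSubgroup C) {S : Multiset C} (hQ : ∀ x ∈ S, x ∈ Q) (j : ℕ)
    (hS : j * Nat.card Q + Nat.card Q - 1 ≤ S.card) :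
    ∃ T ≤ S, T.card = j * Nat.card Q ∧ T.sum = 0 := by
  lift S to Multiset Q using hQ
  obtain ⟨T, hT, hcard, hsum⟩ :=
    exists_le_card_eq_mul_card_sum_eq_zero (S := S) j (by simpa using hS)
  exact ⟨T.map (↑), Multiset.map_le_map hT, by simpa using hcard, by
    rw [← AddSubgroup.val_multiset_sum, hsum, AddSubgroup.coe_zero]⟩

end ErdosGinzburgZiv

section Spread

variable {C : Type*} [AddCommGroup C]

/-- A sequence is spread if it has at least `|C / Q| - 1` terms outside every coset of every
proper nontrivial subgroup `Q`. -/
def IsSpread (Z : Multiset C) : Prop :=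
  ∀ Q : AddSubgroup C, Q ≠ ⊥ → Q ≠ ⊤ → ∀ c : C,
    Nat.card C ≤ Nat.card Q * ((Z.filter fun z => z - c ∉ Q).card + 1)

theorem IsSpread.subsetSums_eq_univ [Fintype C] {Z E : Multiset C} {A : Finset C} {c : C}
    {Q : AddSubgroup C} (hZ : IsSpread Z) (hA : A.Nonempty)
    (hQ : stabilizer C (subsetSums A E) = Q) (hb : Q ≠ ⊥)
    (hE : (Z.filter fun z => z - c ∉ Q).card ≤ (E.filter (· ∉ Q)).card) :
    subsetSums A E = Finset.univ := by
  by_contra hne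
  have hcard := mul_card_filter_add_two_le_card hA hQ hne
  have hspread := hZ Q hb (hQ ▸ stabilizer_ne_top (hA.mono (subset_subsetSums _ _)) hne) c
  have := Nat.le_of_mul_le_mul_left (hcard.trans hspread) Nat.card_pos
  lia

theorem le_stabilizer_toFinset [Fintype C] (Q : AddSubgroup C) :
    Q ≤ stabilizer C (Q : Set C).toFinset := fun _ hq =>
  mem_stabilizer_finset'.2 fun _ hx => Set.mem_toFinset.2 (Q.add_mem hq (Set.mem_toFinset.1 hx))

theorem IsSpread.subsetSums_subgroup_eq_univ [Fintype C] {Z : Multiset C} (hZ : IsSpread Z)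
    {Q : AddSubgroup C} (hb : Q ≠ ⊥) (c : C) :
    subsetSums (Q : Set C).toFinset ((Z.filter fun z => z - c ∉ Q).map (· - c)) = Finset.univ := by
  obtain ⟨R, hR⟩ : ∃ R, stabilizer C (subsetSums (Q : Set C).toFinset
      ((Z.filter fun z => z - c ∉ Q).map (· - c))) = R := ⟨_, rfl⟩
  have hle : Q ≤ R := hR ▸ le_stabilizer_subsetSums (le_stabilizer_toFinset Q) _
  refine hZ.subsetSums_eq_univ (c := c) ⟨0, Set.mem_toFinset.2 Q.zero_mem⟩ hR
    (fun h => hb (le_bot_iff.1 (h ▸ hle))) ?_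
  rw [Multiset.filter_map, Multiset.card_map, Multiset.filter_filter]
  refine Multiset.card_le_card (Multiset.monotone_filter_right _ fun z hz => ?_)
  exact ⟨hz, fun h => hz (hle h)⟩

end Spread

section Critical

variable {C : Type*} [AddCommGroup C]

/-- A sequence of `2|C| + l` terms, where `|C| / 2 < l < |C|` approximately, is critical if it has
no zero-sum subsequence of length `2|C|`. -/
structure IsCritical (Z : Multiset C) (l : ℕ) : Prop where
  card_eq : Z.card = 2 * Nat.card C + l
  add_two_le : l + 2 ≤ Nat.card C
  card_add_two_le : Nat.card C + 2 ≤ 2 * l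
  sum_ne_zero : ∀ T ≤ Z, T.card = 2 * Nat.card C → T.sum ≠ 0

theorem two_mul_card_add_index_le [Finite C] {Q : AddSubgroup C} (hb : Q ≠ ⊥) (ht : Q ≠ ⊤) :
    2 * (Nat.card Q + Q.index) ≤ Nat.card C + 4 := by
  have hcard := AddSubgroup.one_lt_card_iff_ne_bot Q |>.2 hb
  have hindex := AddSubgroup.one_lt_index_of_ne_top ht
  rw [← Q.card_mul_index]
  nlinarith

theorem two_mul_card_le_card [Finite C] {Q : AddSubgroup C} (ht : Q ≠ ⊤) :
    2 * Nat.card Q ≤ Nat.card C := by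
  rw [← Q.card_mul_index, mul_comm]
  exact Nat.mul_le_mul_left _ (AddSubgroup.one_lt_index_of_ne_top ht)

theorem IsCritical.isSpread [Finite C] [IsAddCyclic C] {Z : Multiset C} {l : ℕ}
    (hZ : IsCritical Z l) : IsSpread Z := by
  obtain ⟨hcard, -, hl, hsum⟩ := hZ
  intro Q hb ht c
  by_contra! hlt
  have hindex := two_mul_card_add_index_le hb ht
  rw [← Q.card_mul_index] at hlt
  have hfew := Nat.lt_of_mul_lt_mul_left hlt
  have hsplit := congrArg Multiset.card (Multiset.filter_add_not (fun z => z - c ∉ Q) Z)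
  rw [Multiset.card_add] at hsplit
  have hmul : 2 * Q.index * Nat.card Q = 2 * Nat.card C := by
    rw [← Q.card_mul_index]; ring
  -- The many terms in `c + Q` contain a zero-sum subsequence by Erdős–Ginzburg–Ziv in `Q`.
  obtain ⟨T, hT, hTcard, hTsum⟩ := exists_le_card_eq_mul_card_sum_eq_zero_of_mem Q
    (S := (Z.filter fun z => ¬(z - c ∉ Q)).map (· - c))
    (Multiset.forall_mem_map_iff.2 fun z hz => not_not.1 (Multiset.mem_filter.1 hz).2)
    (2 * Q.index) (by rw [Multiset.card_map, hmul]; lia)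
  obtain ⟨T', hT', rfl⟩ := exists_le_map_eq _ hT
  rw [Multiset.card_map, hmul] at hTcard
  refine hsum T' (hT'.trans (Multiset.filter_le _ _)) hTcard ?_
  rw [Multiset.sum_map_sub, Multiset.map_const', Multiset.sum_replicate, hTcard, mul_nsmul,
    smul_comm, card_nsmul_eq_zero'] at hTsum
  simpa using hTsum

theorem subsetSums_subset_of_map_mk_eq {A : Finset C} {Q : AddSubgroup C}
    (hQ : Q ≤ stabilizer C A) {E F : Multiset C}
    (h : E.map (QuotientAddGroup.mk' Q) = F.map (QuotientAddGroup.mk' Q)) :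
    subsetSums A E ⊆ subsetSums A F := by
  intro x hx
  obtain ⟨a, ha, D, hD, rfl⟩ := mem_subsetSums.1 hx
  obtain ⟨D', hD', hmap⟩ := exists_le_map_eq _ (h ▸ Multiset.map_le_map hD)
  have hmem : D.sum - D'.sum ∈ Q := by
    rw [← QuotientAddGroup.ker_mk' Q, AddMonoidHom.mem_ker, map_sub, map_multiset_sum,
      map_multiset_sum, hmap, sub_self]
  exact mem_subsetSums.2 ⟨D.sum - D'.sum + a, mem_stabilizer_finset'.1 (hQ hmem) ha, D', hD',
    by abel⟩

variable [Fintype C] {Z : Multiset C} {l : ℕ}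

theorem IsCritical.subsetSums_diffs_ne_univ (hZ : IsCritical Z l) {P : Multiset (C × C)}
    (hP : entries P ≤ Z) (hPl : P.card ≤ l) : subsetSums {0} (diffs P) ≠ Finset.univ := by
  intro h
  obtain ⟨a, ha, T, hT, hcard, hsum⟩ := exists_le_card_eq_sum_eq (A := {0}) hP (τ := 0)
    (r := 2 * Nat.card C) (by have := hZ.add_two_le; lia) (by rw [hZ.card_eq]; lia) (by simp [h])
  rw [Finset.mem_singleton.1 ha, add_zero] at hsum
  exact hZ.sum_ne_zero T hT hcard hsum

theorem IsCritical.subsetSums_diffs_ne_subgroup (hZ : IsCritical Z l) (hspread : IsSpread Z)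
    {Q : AddSubgroup C} (hb : Q ≠ ⊥) (ht : Q ≠ ⊤) {c : C} {P : Multiset (C × C)} {V : Multiset C}
    (hPV : entries P + V = Z.filter fun z => z - c ∈ Q) (hP : P.card + 1 ≤ Nat.card Q)
    (hQ : l + Nat.card Q ≤ (Z.filter fun z => z - c ∈ Q).card) :
    subsetSums {0} (diffs P) ≠ (Q : Set C).toFinset := by
  intro hsums
  obtain ⟨E, hE, huniv, hcard⟩ := exists_le_subsetSums_eq (le_stabilizer_toFinset Q)
    ((Z.filter fun z => z - c ∉ Q).map (· - c))
  obtain ⟨X, hX, rfl⟩ := exists_le_map_eq _ hE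
  rw [hspread.subsetSums_subgroup_eq_univ hb c] at huniv hcard
  have hQcard : (Q : Set C).toFinset.card = Nat.card Q :=
    (Nat.card_eq_card_toFinset (Q : Set C)).symm
  rw [hQcard, Multiset.card_map, Finset.card_univ, ← Nat.card_eq_fintype_card,
    ← Q.card_mul_index, add_comm, ← mul_add_one] at hcard
  have hXcard := Nat.le_of_mul_le_mul_left hcard Nat.card_pos
  have hindex := two_mul_card_add_index_le hb ht
  have hl := hZ.card_add_two_le
  have hVcard := congrArg Multiset.card hPV
  rw [Multiset.card_add, card_entries] at hVcard
  obtain ⟨Y, hY, hYX⟩ := exists_le_card_eq V (r := X.card) (by lia)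
  obtain ⟨P', rfl, rfl⟩ := exists_map_fst_eq_map_snd_eq hYX
  have hPP' : entries (P + P') ≤ Z := by
    rw [← Multiset.filter_add_not (fun z => z - c ∈ Q) Z, ← hPV, entries_add, entries.eq_1 P',
      ← add_assoc]
    gcongr
  refine hZ.subsetSums_diffs_ne_univ hPP' (by simp at hXcard ⊢; lia) ?_
  rw [diffs_add, subsetSums_add, hsums]
  refine Finset.univ_subset_iff.1
    (huniv ▸ subsetSums_subset_of_map_mk_eq (le_stabilizer_toFinset Q) ?_)
  -- The first entries of `P'` lie in `c + Q`, so differences agree with translates modulo `Q`.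
  simp only [diffs, Multiset.map_map]
  refine Multiset.map_congr rfl fun p hp => ?_
  have hmem : p.1 - c ∈ Q := by
    have hp₁ : p.1 ∈ entries P + V :=
      Multiset.mem_add.2 (Or.inr (Multiset.mem_of_le hY (Multiset.mem_map_of_mem _ hp)))
    rw [hPV, Multiset.mem_filter] at hp₁
    exact hp₁.2
  simpa [QuotientAddGroup.eq, sub_eq_add_neg, add_comm, add_left_comm] using hmem

end Critical

section Heavy

variable {C : Type*} [AddCommGroup C]

/-- A subgroup is heavy for `Z` (with excess `l`) if one of its cosets contains at least
`l + 2 |Q|` terms of `Z`. -/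
def IsHeavy (Z : Multiset C) (l : ℕ) (Q : AddSubgroup C) : Prop :=
  ∃ c, l + 2 * Nat.card Q ≤ (Z.filter fun z => z - c ∈ Q).card

theorem IsHeavy.of_le {Z V : Multiset C} {l : ℕ} {Q : AddSubgroup C} {c : C} (hVZ : V ≤ Z)
    (hV : ∀ z ∈ V, z - c ∈ Q) (hcard : l + 2 * Nat.card Q ≤ V.card) : IsHeavy Z l Q :=
  ⟨c, hcard.trans (Multiset.card_le_card (Multiset.le_filter.2 ⟨hVZ, hV⟩))⟩

theorem isHeavy_bot_iff {Z : Multiset C} {l : ℕ} : IsHeavy Z l ⊥ ↔ ∃ c, l + 2 ≤ Z.count c := by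
  simp only [IsHeavy, AddSubgroup.mem_bot, sub_eq_zero, Nat.card_unique, mul_one,
    ← Multiset.countP_eq_card_filter, Multiset.count, eq_comm]

theorem mem_of_mem_diffs {P : Multiset (C × C)} {Q : AddSubgroup C} {c : C}
    (hP : ∀ x ∈ entries P, x - c ∈ Q) : ∀ d ∈ diffs P, d ∈ Q := by
  intro d hd
  obtain ⟨p, hp, rfl⟩ := Multiset.mem_map.1 hd
  simpa using Q.sub_mem (hP p.2 (mem_entries.2 ⟨p, hp, Or.inr rfl⟩))
    (hP p.1 (mem_entries.2 ⟨p, hp, Or.inl rfl⟩))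

variable [Finite C] {Z : Multiset C} {l : ℕ}

theorem IsCritical.exists_isHeavy_lt (hZ : IsCritical Z l) (hspread : IsSpread Z)
    {Q : AddSubgroup C} (hb : Q ≠ ⊥) (ht : Q ≠ ⊤) (hQ : IsHeavy Z l Q) :
    ∃ Q' < Q, IsHeavy Z l Q' := by
  cases nonempty_fintype C
  obtain ⟨c, hc⟩ := hQ
  obtain ⟨P, V, hPV, -, hgrow, hV⟩ := exists_subsetSums_diffs_growth_lt (A := {0}) (e := 1) 1
    (by simp) (Z.filter fun z => z - c ∈ Q)
  have hmem : ∀ z ∈ entries P + V, z - c ∈ Q := hPV ▸ fun z => Multiset.of_mem_filter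
  have hne := hZ.subsetSums_diffs_ne_subgroup hspread hb ht hPV
  have hVcard := congrArg Multiset.card hPV
  have hVZ : V ≤ Z :=
    (Multiset.le_add_left _ _).trans (hPV.le.trans (Multiset.filter_le _ _))
  rw [Multiset.card_add, card_entries] at hVcard
  have h0 := subset_subsetSums {(0 : C)} (diffs P) (Finset.mem_singleton_self 0)
  have hAQ : subsetSums {0} (diffs P) ⊆ (Q : Set C).toFinset := fun a ha =>
    Set.mem_toFinset.2 <| subsetSums_subset_of_mem (by simp) (mem_of_mem_diffs fun z hz =>
      hmem z (Multiset.mem_add.2 (Or.inl hz))) a ha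
  generalize subsetSums {0} (diffs P) = A at *
  have hle : stabilizer C A ≤ Q := fun q hq => by
    simpa using hAQ (mem_stabilizer_finset'.1 hq h0)
  have hQcard : (Q : Set C).toFinset.card = Nat.card Q :=
    (Nat.card_eq_card_toFinset (Q : Set C)).symm
  have hA := Finset.card_le_card hAQ
  have hAcard := card_add_card_le_of_ssubset le_rfl (hle.trans (le_stabilizer_toFinset Q))
    (hAQ.ssubset_of_ne (hne (by lia) (by lia)))
  obtain ⟨v, hv⟩ := Multiset.card_pos_iff_exists_mem.1 (by lia : 0 < V.card)
  refine ⟨stabilizer C A, hle.lt_of_ne fun h => ?_, .of_le (c := v) hVZ (fun z hz => ?_) (by lia)⟩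
  · have := Finset.card_pos.2 ⟨0, h0⟩
    rw [h] at hAcard
    lia
  · by_contra hzv
    have := card_add_card_le_card_union_vadd le_rfl hzv
    have := hV v hv z hz fun h => hzv (by simp [h])
    have : 0 < Nat.card (stabilizer C A) := Nat.card_pos
    lia

theorem IsCritical.exists_isHeavy_ne_top (hZ : IsCritical Z l) :
    ∃ Q : AddSubgroup C, Q ≠ ⊤ ∧ IsHeavy Z l Q := by
  cases nonempty_fintype C
  obtain ⟨hZcard, hl, hl', -⟩ := id hZ
  obtain ⟨P, V, rfl, -, hPcard, h⟩ := exists_subsetSums_diffs_eq_univ_or_le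
    (Finset.singleton_nonempty (0 : C)) (k := 0) (Nat.zero_le _) (by lia) Z
  rw [Multiset.card_add, card_entries] at hZcard
  rcases h with h | ⟨hP, hV | ⟨Q, hQ, c, hV⟩⟩
  · exact absurd h (hZ.subsetSums_diffs_ne_univ (Multiset.le_add_right _ _) (by lia))
  · obtain ⟨v, hv⟩ := exists_card_le_two_mul_count (V := V)
      (fun h => by rw [h, Multiset.card_zero] at hZcard; lia) hV
    refine ⟨⊥, fun h => ?_, isHeavy_bot_iff.2 ⟨v, ?_⟩⟩
    · have := Nat.card_unique (α := (⊥ : AddSubgroup C))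
      rw [h, AddSubgroup.card_top] at this
      lia
    · rw [Multiset.count_add]
      lia
  · have := two_mul_card_le_card hQ
    exact ⟨Q, hQ, .of_le (Multiset.le_add_left _ _) hV (by lia)⟩

theorem IsCritical.exists_le_count (hZ : IsCritical Z l) (hspread : IsSpread Z) :
    ∃ c, l + 2 ≤ Z.count c := by
  obtain ⟨Q, hQ⟩ := exists_minimal_of_wellFoundedLT
    (fun Q : AddSubgroup C => Q ≠ ⊤ ∧ IsHeavy Z l Q) hZ.exists_isHeavy_ne_top
  suffices Q = ⊥ from isHeavy_bot_iff.1 (this ▸ hQ.prop.2)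
  by_contra hb
  obtain ⟨Q', hlt, hQ'⟩ := hZ.exists_isHeavy_lt hspread hb hQ.prop.1 hQ.prop.2
  exact hQ.not_prop_of_lt hlt ⟨hlt.ne_top, hQ'⟩

end Heavy

section Translate

variable {C : Type*} [AddCommGroup C]

theorem sum_map_sub_const (T : Multiset C) (c : C) :
    (T.map (· - c)).sum = T.sum - T.card • c := by
  rw [Multiset.sum_map_sub, Multiset.map_id', Multiset.map_const', Multiset.sum_replicate]

theorem IsCritical.map_sub {Z : Multiset C} {l : ℕ} (hZ : IsCritical Z l) (c : C) :
    IsCritical (Z.map (· - c)) l where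
  card_eq := by rw [Multiset.card_map, hZ.card_eq]
  add_two_le := hZ.add_two_le
  card_add_two_le := hZ.card_add_two_le
  sum_ne_zero T hT hcard hsum := by
    obtain ⟨T', hT', rfl⟩ := exists_le_map_eq _ hT
    rw [Multiset.card_map] at hcard
    refine hZ.sum_ne_zero T' hT' hcard ?_
    simpa [sum_map_sub_const, hcard, mul_nsmul, card_nsmul_eq_zero'] using hsum

theorem IsSpread.map_sub {Z : Multiset C} (hZ : IsSpread Z) (c : C) :
    IsSpread (Z.map (· - c)) := by
  intro Q hb ht b
  simpa only [Multiset.filter_map, Multiset.card_map, Function.comp_def, sub_sub]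
    using hZ Q hb ht (c + b)

end Translate

section Shape

variable {α : Type*}

theorem replicate_count_add_filter_ne [DecidableEq α] (Z : Multiset α) (c : α) :
    Multiset.replicate (Z.count c) c + Z.filter (· ≠ c) = Z := by
  rw [← Multiset.filter_eq', Multiset.filter_add_not]

theorem entries_map_prodMk_add {E : Multiset α} {a : ℕ} (h : E.card ≤ a) (c : α)
    (F : Multiset α) :
    entries (E.map (Prod.mk c)) + (Multiset.replicate (a - E.card) c + F) =
      Multiset.replicate a c + (E + F) := by
  rw [entries_map_prodMk, add_add_add_comm, ← Multiset.replicate_add, Nat.add_sub_cancel' h]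

variable {C : Type*} [AddCommGroup C]

theorem exists_eq_or_eq_neg_notMem {V : Multiset C} (h0 : 0 ∈ V) (hV : V.toFinset.card ≤ 2)
    (x : C) : ∃ u, (u = x ∨ u = -x) ∧ (u ∉ V ∨ u = -u) := by
  by_contra! h
  obtain ⟨hx, hxx⟩ := h x (Or.inl rfl)
  have hsub : {0, x, -x} ⊆ V.toFinset := by
    simp [Finset.insert_subset_iff, h0, hx, (h (-x) (Or.inr rfl)).1]
  have hx0 : x ≠ 0 := fun hx0 => hxx (by simp [hx0])
  have := Finset.card_le_card hsub
  rw [Finset.card_insert_of_notMem (by simpa using ⟨hx0.symm, hx0⟩),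
    Finset.card_pair hxx] at this
  lia

theorem card_filter_ne_neg_le_count {F : Multiset C} {u : C} (hF : ∀ y ∈ F, y = u ∨ y = -u) :
    (F.filter (· ≠ -u)).card ≤ F.count u := by
  rw [Multiset.count, Multiset.countP_eq_card_filter]
  refine Multiset.card_le_card (Multiset.le_filter.2 ⟨Multiset.filter_le _ _, fun y hy => ?_⟩)
  obtain ⟨hyF, hyu⟩ := Multiset.mem_filter.1 hy
  exact ((hF y hyF).resolve_right hyu).symm

variable [Finite C] {D : Multiset C} {a l : ℕ}

theorem IsCritical.subsetSums_filter_ne_subgroup [Fintype C]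
    (hZ : IsCritical (Multiset.replicate a 0 + D) l)
    (hspread : IsSpread (Multiset.replicate a 0 + D)) (ha : l + 2 ≤ a)
    (hDcard : Nat.card C ≤ D.card + 1) {Q : AddSubgroup C} (ht : Q ≠ ⊤) (hb : Q ≠ ⊥)
    (hQ : (D.filter (· ∉ Q)).card + Nat.card Q ≤ Nat.card C) :
    subsetSums {0} (D.filter (· ∈ Q)) ≠ (Q : Set C).toFinset := by
  intro hsums
  obtain ⟨E, hE, hEQ, hcard⟩ := exists_le_subsetSums_eq (A := {0}) bot_le (D.filter (· ∈ Q))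
  have hQcard : (Q : Set C).toFinset.card = Nat.card Q :=
    (Nat.card_eq_card_toFinset (Q : Set C)).symm
  rw [hsums, hQcard, Finset.card_singleton, Nat.card_unique, one_mul] at hcard
  obtain ⟨F, hF⟩ := Multiset.le_iff_exists_add.1 hE
  have hDQ := congrArg Multiset.card (Multiset.filter_add_not (· ∈ Q) D)
  have hindex := two_mul_card_le_card ht
  have hl := hZ.card_add_two_le
  have hfilter : (Multiset.replicate a 0 + D).filter (fun z => z - 0 ∈ Q) =
      Multiset.replicate a 0 + D.filter (· ∈ Q) := by
    simp only [sub_zero]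
    rw [Multiset.filter_add, Multiset.filter_eq_self.2 fun z hz =>
      Multiset.eq_of_mem_replicate hz ▸ Q.zero_mem]
  have hpairs := entries_map_prodMk_add (E := E) (a := a) (by lia) 0 F
  refine hZ.subsetSums_diffs_ne_subgroup hspread hb ht (c := 0) (P := E.map (Prod.mk 0))
    (by rw [hfilter, hF, hpairs]) (by rw [Multiset.card_map]; lia) ?_ ?_
  · rw [hfilter, Multiset.card_add, Multiset.card_replicate]
    rw [Multiset.card_add] at hDQ
    lia
  · simp only [diffs_map_prodMk, sub_zero, Multiset.map_id', hEQ, hsums]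

theorem IsCritical.card_lt_card_filter_add (hZ : IsCritical (Multiset.replicate a 0 + D) l)
    (hspread : IsSpread (Multiset.replicate a 0 + D)) (hD : ∀ x ∈ D, x ≠ 0) (ha : l + 2 ≤ a)
    (hDcard : Nat.card C ≤ D.card + 1) (Q : AddSubgroup C) (ht : Q ≠ ⊤) (hb : Q ≠ ⊥) :
    Nat.card C < (D.filter (· ∉ Q)).card + Nat.card Q := by
  cases nonempty_fintype C
  by_contra! hQ
  induction Q using WellFoundedLT.induction with
  | ind Q ih =>
  have hne := hZ.subsetSums_filter_ne_subgroup hspread ha hDcard ht hb hQ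
  have hDQ := congrArg Multiset.card (Multiset.filter_add_not (· ∈ Q) D)
  rw [Multiset.card_add] at hDQ
  have h0 := subset_subsetSums {(0 : C)} (D.filter (· ∈ Q)) (Finset.mem_singleton_self 0)
  have hAQ : subsetSums {0} (D.filter (· ∈ Q)) ⊆ (Q : Set C).toFinset := fun a ha =>
    Set.mem_toFinset.2 <| subsetSums_subset_of_mem (by simp) (fun _ => Multiset.of_mem_filter) a ha
  obtain ⟨S, hS⟩ : ∃ S, stabilizer C (subsetSums {0} (D.filter (· ∈ Q))) = S := ⟨_, rfl⟩
  have hK := mul_card_filter_le_card_subsetSums (Finset.singleton_nonempty 0) _ hS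
  have hle : S ≤ Q := fun q hq => by
    simpa using hAQ (mem_stabilizer_finset'.1 (hS.ge hq) h0)
  have hAcard := card_add_card_le_of_ssubset hS.ge (hle.trans (le_stabilizer_toFinset Q))
    (hAQ.ssubset_of_ne hne)
  have hQcard : (Q : Set C).toFinset.card = Nat.card Q :=
    (Nat.card_eq_card_toFinset (Q : Set C)).symm
  have hltQ : S ≠ Q := fun h => by
    have := Finset.card_pos.2 ⟨0, h0⟩
    rw [h] at hAcard
    lia
  have hSpos : 0 < Nat.card S := Nat.card_pos
  have hK' := (Nat.le_mul_of_pos_left _ hSpos).trans hK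
  by_cases hSb : S = ⊥
  · rw [Multiset.filter_eq_self.2 fun z hz => ?_] at hK'
    · lia
    · rw [hSb, AddSubgroup.mem_bot]
      exact hD z (Multiset.mem_of_mem_filter hz)
  · refine ih S (hle.lt_of_ne hltQ) (fun h => ht (top_le_iff.1 (h ▸ hle))) hSb ?_
    have hsplit := congrArg Multiset.card (Multiset.filter_add_not (· ∈ Q) (D.filter (· ∉ S)))
    rw [Multiset.card_add, Multiset.filter_comm] at hsplit
    have := Multiset.card_le_card
      (Multiset.filter_le_filter (· ∉ Q) (Multiset.filter_le (· ∉ S) D))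
    lia

theorem IsCritical.exists_two_mul_card_add_card_filter_ne_lt {E F : Multiset C} {x : C}
    (hZ : IsCritical (Multiset.replicate a 0 + (E + F)) l) (ha : l + 2 ≤ a)
    (hA : 2 * E.card ≤ (subsetSums {0} E).card) (hE : 2 * E.card ≤ Nat.card C)
    (hx : ∀ y ∈ F, y = x ∨ y = -x)
    (hF : ∀ Q : AddSubgroup C, Q ≠ ⊤ → ¬∀ y ∈ F, y ∈ Q) :
    ∃ d, 2 * (E.card + (F.filter (· ≠ d)).card) < Nat.card C := by
  cases nonempty_fintype C
  obtain ⟨-, hl, hl', -⟩ := id hZ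
  obtain ⟨P, V, hPV, hPne, hPcard, hP⟩ := exists_subsetSums_diffs_eq_univ_or_le
    ⟨0, subset_subsetSums {0} E (Finset.mem_singleton_self 0)⟩ hA (by lia)
    (Multiset.replicate (a - E.card) 0 + F)
  rcases hP with hP | ⟨hPcard, hV⟩
  · refine absurd ?_ (hZ.subsetSums_diffs_ne_univ (P := E.map (Prod.mk 0) + P) ?_ ?_)
    · simpa [diffs_add, diffs_map_prodMk, subsetSums_add] using hP
    · rw [entries_add, ← entries_map_prodMk_add (by lia), ← hPV]
      gcongr
      exact Multiset.le_add_right _ _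
    · rw [Multiset.card_add, Multiset.card_map]
      lia
  have hPcount := count_entries_le hPne
  have hcount : ∀ y, (entries P).count y + V.count y =
      (Multiset.replicate (a - E.card) 0).count y + F.count y := fun y => by
    rw [← Multiset.count_add, hPV, Multiset.count_add]
  have h0 : 0 ∈ V := Multiset.count_pos.1 (by
    have := hPcount 0
    have := hcount 0
    rw [Multiset.count_replicate_self] at this
    lia)
  obtain ⟨u, hu, huV⟩ : ∃ u, (u = x ∨ u = -x) ∧ (u ∉ V ∨ u = -u) := by
    rcases hV with hV | ⟨Q, ht, c, hV⟩
    · exact exists_eq_or_eq_neg_notMem h0 hV x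
    · refine ⟨x, Or.inl rfl, Or.inl fun hxV => hF Q ht fun y hy => ?_⟩
      have hxQ : x ∈ Q := by simpa using Q.sub_mem (hV x hxV) (hV 0 h0)
      rcases hx y hy with rfl | rfl
      exacts [hxQ, Q.neg_mem hxQ]
  have huF : ∀ y ∈ F, y = u ∨ y = -u := by
    rcases hu with rfl | rfl <;> simpa [or_comm] using hx
  refine ⟨-u, ?_⟩
  rcases huV with huV | huV
  · have := card_filter_ne_neg_le_count huF
    have := hPcount u
    have := hcount u
    rw [Multiset.count_eq_zero.2 huV] at this
    lia
  · rw [Multiset.filter_eq_nil.2 fun y hy => not_not.2 ((huF y hy).elim (·.trans huV) id)]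
    rw [Multiset.card_zero]
    lia

theorem IsCritical.exists_two_mul_card_filter_ne_le
    (hZ : IsCritical (Multiset.replicate a 0 + D) l)
    (hspread : IsSpread (Multiset.replicate a 0 + D)) (hD : ∀ x ∈ D, x ≠ 0) (ha : l + 2 ≤ a)
    (hDcard : Nat.card C ≤ D.card + 1) : ∃ d, 2 * (D.filter (· ≠ d)).card ≤ Nat.card C := by
  cases nonempty_fintype C
  obtain ⟨-, hl, hl', -⟩ := id hZ
  obtain ⟨E, F, rfl, hEcard, hE⟩ := exists_subsetSums_eq_univ_or_le hD
  rcases hE with hE | ⟨hA, hEcard, hF⟩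
  · refine absurd ?_ (hZ.subsetSums_diffs_ne_univ (P := E.map (Prod.mk 0)) ?_
      (by rw [Multiset.card_map]; lia))
    · simpa [diffs_map_prodMk] using hE
    · exact (Multiset.le_add_right _ _).trans (entries_map_prodMk_add (by lia) 0 F).le
  rw [Multiset.card_add] at hDcard
  have hgen : ∀ Q : AddSubgroup C, Q ≠ ⊤ → ¬∀ y ∈ F, y ∈ Q := by
    intro Q ht hFQ
    obtain ⟨y, hy⟩ := Multiset.card_pos_iff_exists_mem.1 (by lia : 0 < F.card)
    have := hZ.card_lt_card_filter_add hspread hD ha (by rw [Multiset.card_add]; lia) Q ht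
      fun hb => hD y (by simp [hy]) (by simpa [hb] using hFQ y hy)
    rw [Multiset.filter_add, Multiset.filter_eq_nil.2 fun y hy => not_not.2 (hFQ y hy), add_zero]
      at this
    have := Multiset.card_le_card (E.filter_le (· ∉ Q))
    have := two_mul_card_le_card ht
    lia
  obtain ⟨x, hx⟩ := hF.resolve_right fun ⟨Q, ht, hQ⟩ => hgen Q ht hQ
  obtain ⟨d, hd⟩ := hZ.exists_two_mul_card_add_card_filter_ne_lt ha hA hEcard hx hgen
  have := Multiset.card_le_card (E.filter_le (· ≠ d))
  exact ⟨d, by rw [Multiset.filter_add, Multiset.card_add]; lia⟩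

theorem exists_eq_replicate_add_replicate_mul_add {Z R : Multiset C} {c c' : C} {a b : ℕ}
    (hZ : Z = Multiset.replicate a c + Multiset.replicate b c' + R)
    (hR : 2 * R.card ≤ Nat.card C) :
    ∃ (j : ℕ) (E : Multiset C), 2 * E.card ≤ 3 * Nat.card C ∧
      Z = Multiset.replicate a c + Multiset.replicate (Nat.card C * j) c' + E := by
  refine ⟨b / Nat.card C, Multiset.replicate (b % Nat.card C) c' + R, ?_, ?_⟩
  · have := Nat.mod_lt b (Nat.card_pos (α := C))
    rw [Multiset.card_add, Multiset.card_replicate]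
    lia
  · rw [hZ, add_assoc, add_assoc, ← add_assoc (Multiset.replicate (Nat.card C * _) c'),
      ← Multiset.replicate_add, Nat.div_add_mod]

theorem IsCritical.exists_eq_replicate_add_replicate_add [IsAddCyclic C] {Z : Multiset C}
    (hZ : IsCritical Z l) :
    ∃ (c c' : C) (a j : ℕ) (E : Multiset C), Nat.card C ≤ a ∧ 2 * E.card ≤ 3 * Nat.card C ∧
      Z = Multiset.replicate a c + Multiset.replicate (Nat.card C * j) c' + E := by
  obtain ⟨hZcard, hl, hl', -⟩ := id hZ
  have hspread := hZ.isSpread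
  obtain ⟨c, hc⟩ := hZ.exists_le_count hspread
  have hsplit := replicate_count_add_filter_ne Z c
  have hcard := congrArg Multiset.card hsplit
  rw [Multiset.card_add, Multiset.card_replicate] at hcard
  rcases Nat.lt_or_ge ((Z.filter (· ≠ c)).card + 1) (Nat.card C) with hlt | hge
  · exact ⟨c, c, Z.count c, 0, Z.filter (· ≠ c), by lia, by lia, by simpa using hsplit.symm⟩
  have hmap : Z.map (· - c) =
      Multiset.replicate (Z.count c) 0 + (Z.filter (· ≠ c)).map (· - c) := by
    conv_lhs => rw [← hsplit]
    rw [Multiset.map_add, Multiset.map_replicate, sub_self]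
  obtain ⟨d, hd⟩ := (hmap ▸ hZ.map_sub c).exists_two_mul_card_filter_ne_le
    (hmap ▸ hspread.map_sub c) (Multiset.forall_mem_map_iff.2 fun z hz =>
      sub_ne_zero.2 (Multiset.mem_filter.1 hz).2) hc (by rwa [Multiset.card_map])
  simp only [Multiset.filter_map, Multiset.card_map, Function.comp_def, ne_eq, sub_eq_iff_eq_add]
    at hd
  have hsplit' := replicate_count_add_filter_ne (Z.filter (· ≠ c)) (d + c)
  have hcard' := congrArg Multiset.card hsplit'
  rw [Multiset.card_add, Multiset.card_replicate] at hcard'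
  rw [← hsplit', ← add_assoc] at hsplit
  rcases le_total (Nat.card C) (Z.count c) with ha | ha
  · obtain ⟨j, E, hE⟩ := exists_eq_replicate_add_replicate_mul_add hsplit.symm hd
    exact ⟨c, d + c, _, j, E, ha, hE⟩
  · rw [add_comm (Multiset.replicate _ c)] at hsplit
    obtain ⟨j, E, hE⟩ := exists_eq_replicate_add_replicate_mul_add hsplit.symm hd
    exact ⟨d + c, c, _, j, E, by lia, hE⟩

end Shape

section Pairing

variable {α β : Type*}

theorem exists_le_card_eq_succ_forall_eq [Finite β] (f : α → β) (S : Multiset α) {b : ℕ}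
    (h : Nat.card β * b < S.card) : ∃ T ≤ S, T.card = b + 1 ∧ ∃ q, ∀ x ∈ T, f x = q := by
  cases nonempty_fintype β
  have hsum : ∑ _q : β, b < ∑ q, (S.map f).count q := by
    rwa [Multiset.sum_count_eq_card fun _ _ => Finset.mem_univ _, Multiset.card_map,
      Finset.sum_const, Finset.card_univ, ← Nat.card_eq_fintype_card, smul_eq_mul]
  obtain ⟨q, -, hq⟩ := Finset.exists_lt_of_sum_lt hsum
  rw [Multiset.count_map] at hq
  obtain ⟨T, hT, hcard⟩ := exists_le_card_eq _ (Nat.succ_le_of_lt hq)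
  exact ⟨T, hT.trans (Multiset.filter_le _ _), hcard, q, fun x hx =>
    (Multiset.mem_filter.1 (Multiset.mem_of_le hT hx)).2.symm⟩

theorem exists_entries_le_forall_eq [Finite β] (f : α → β) {h : ℕ} {S : Multiset α}
    (hS : Nat.card β + 2 * h ≤ S.card) :
    ∃ P : Multiset (α × α), P.card = h ∧ entries P ≤ S ∧ ∀ p ∈ P, f p.1 = f p.2 := by
  induction h generalizing S with
  | zero => exact ⟨0, rfl, Multiset.zero_le _, by simp⟩
  | succ h ih =>
    obtain ⟨T, hT, hcard, q, hq⟩ := exists_le_card_eq_succ_forall_eq f S (b := 1) (by lia)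
    obtain ⟨x, y, rfl⟩ := Multiset.card_eq_two.1 hcard
    obtain ⟨R, rfl⟩ := Multiset.le_iff_exists_add.1 hT
    rw [Multiset.card_add, hcard] at hS
    obtain ⟨P, hPcard, hP, hf⟩ := ih (S := R) (by lia)
    have hxy : f x = f y := (hq x (by simp)).trans (hq y (by simp)).symm
    exact ⟨(x, y) ::ₘ P, by rw [Multiset.card_cons, hPcard], by simpa using hP,
      Multiset.forall_mem_cons.2 ⟨hxy, hf⟩⟩

theorem card_le_count_entries {P : Multiset (α × α)} {x : α} (h : ∀ p ∈ P, p.1 = x ∨ p.2 = x) :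
    P.card ≤ (entries P).count x := by
  induction P using Multiset.induction_on with
  | empty => simp
  | cons p P ih =>
    have := ih fun q hq => h q (Multiset.mem_cons_of_mem hq)
    have := h p (Multiset.mem_cons_self p P)
    rw [entries_cons, Multiset.count_cons, Multiset.count_cons, Multiset.card_cons]
    split_ifs <;> grind

theorem exists_entries_eq_card_filter_lt {P : Multiset (α × α)} {x : α} (hx : (x, x) ∈ P)
    (hcount : (entries P).count x ≤ P.card) :
    ∃ P', entries P' = entries P ∧
      (P'.filter fun p => p.1 = p.2).card < (P.filter fun p => p.1 = p.2).card := by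
  obtain ⟨R, rfl⟩ := Multiset.exists_cons_of_mem hx
  obtain ⟨⟨y, z⟩, hyz, hyx, hzx⟩ : ∃ p ∈ R, p.1 ≠ x ∧ p.2 ≠ x := by
    by_contra! h
    have := card_le_count_entries (P := R) (x := x) fun p hp => or_iff_not_imp_left.2 (h p hp)
    rw [entries_cons, Multiset.count_cons_self, Multiset.count_cons_self,
      Multiset.card_cons] at hcount
    lia
  obtain ⟨R, rfl⟩ := Multiset.exists_cons_of_mem hyz
  refine ⟨(x, y) ::ₘ (x, z) ::ₘ R, ?_, ?_⟩
  · simp only [entries_cons, Multiset.cons_swap y x]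
  · rw [Multiset.filter_cons_of_neg (p := fun p : α × α => p.1 = p.2) _ hyx.symm,
      Multiset.filter_cons_of_neg (p := fun p : α × α => p.1 = p.2) _ hzx.symm,
      Multiset.filter_cons_of_pos (p := fun p : α × α => p.1 = p.2) _ rfl, Multiset.card_cons,
      Nat.lt_succ_iff]
    exact Multiset.card_le_card (Multiset.filter_le_filter _ (Multiset.le_cons_self _ _))

theorem exists_entries_eq_forall_ne {X : Multiset α} {r : ℕ} (hX : X.card = 2 * r)
    (hcount : ∀ x, X.count x ≤ r) : ∃ P, entries P = X ∧ ∀ p ∈ P, p.1 ≠ p.2 := by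
  obtain ⟨P, hP⟩ : ∃ P : Multiset (α × α), entries P = X := by
    obtain ⟨Y, hY, hYcard⟩ := exists_le_card_eq X (r := r) (by lia)
    obtain ⟨Y', rfl⟩ := Multiset.le_iff_exists_add.1 hY
    rw [Multiset.card_add] at hX
    obtain ⟨P, rfl, rfl⟩ := exists_map_fst_eq_map_snd_eq (X := Y) (Y := Y') (by lia)
    exact ⟨P, rfl⟩
  have hex := exists_minimalFor_of_wellFoundedLT
    (fun P : Multiset (α × α) => entries P = X)
    (fun P : Multiset (α × α) => (P.filter fun p => p.1 = p.2).card) ⟨P, hP⟩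
  obtain ⟨P, hP, hmin⟩ := hex
  refine ⟨P, hP, fun ⟨x, y⟩ hp hxy => ?_⟩
  obtain rfl : x = y := hxy
  have hPcard := card_entries P
  obtain ⟨P', hP', hlt⟩ := exists_entries_eq_card_filter_lt hp
    (by rw [hP]; have := hcount x; rw [hP] at hPcard; lia)
  exact (hmin (hP'.trans hP) hlt.le).not_gt hlt

end Pairing

section Blocks

variable {G : Type*} [AddCommGroup G] {C : AddSubgroup G} {m : ℕ}

variable (C m) in
/-- A block consists of `m` terms in a common coset of `C` whose sum lies in `C`. The terms of a
long sequence over `G` are grouped into blocks so that the block values form a sequence over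
`C`. -/
structure Block where
  terms : Multiset G
  coset : G ⧸ C
  card_terms : terms.card = m
  sum_mem : terms.sum ∈ C
  mk_eq : ∀ x ∈ terms, (x : G ⧸ C) = coset

namespace Block

/-- The value of a block is the sum of its terms, as an element of `C`. -/
def value (B : Block C m) : C := ⟨B.terms.sum, B.sum_mem⟩

/-- A block is constant if all its terms are equal. -/
def IsConst (B : Block C m) : Prop := ∃ g, B.terms = Multiset.replicate m g

end Block

theorem sum_mem_of_mk_eq (hm : ∀ g : G, m • g ∈ C) {B : Multiset G} (hB : B.card = m) {q : G ⧸ C}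
    (hq : ∀ x ∈ B, (x : G ⧸ C) = q) : B.sum ∈ C := by
  obtain ⟨g, rfl⟩ := QuotientAddGroup.mk_surjective q
  rw [← QuotientAddGroup.eq_zero_iff] at *
  rw [← QuotientAddGroup.mk'_apply, map_multiset_sum, QuotientAddGroup.coe_mk',
    Multiset.map_congr rfl hq, Multiset.map_const', hB, Multiset.sum_replicate,
    ← QuotientAddGroup.mk_nsmul, QuotientAddGroup.eq_zero_iff]
  exact hm g

theorem exists_block_terms_eq (hm : ∀ g : G, m • g ∈ C) {B : Multiset G} (hB : B.card = m)
    {q : G ⧸ C} (hq : ∀ x ∈ B, (x : G ⧸ C) = q) : ∃ b : Block C m, b.terms = B :=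
  ⟨⟨B, q, hB, sum_mem_of_mk_eq hm hB hq, hq⟩, rfl⟩

theorem card_bind_terms (𝔅 : Multiset (Block C m)) :
    (𝔅.bind Block.terms).card = m * 𝔅.card := by
  rw [Multiset.card_bind, Multiset.map_congr rfl fun b _ => b.card_terms, Multiset.map_const',
    Multiset.sum_replicate, smul_eq_mul, mul_comm]

theorem sum_bind_terms (𝔅 : Multiset (Block C m)) :
    (𝔅.bind Block.terms).sum = (𝔅.map Block.value).sum := by
  rw [Multiset.sum_bind, AddSubgroup.val_multiset_sum, Multiset.map_map]
  rfl

theorem bind_terms_mono {𝔅 𝔅' : Multiset (Block C m)} (h : 𝔅 ≤ 𝔅') :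
    𝔅.bind Block.terms ≤ 𝔅'.bind Block.terms := by
  obtain ⟨R, rfl⟩ := Multiset.le_iff_exists_add.1 h
  rw [Multiset.add_bind]
  exact Multiset.le_add_right _ _

theorem exists_bind_terms_add_eq [Finite (G ⧸ C)] (hm : ∀ g : G, m • g ∈ C) (hm0 : 0 < m)
    (S : Multiset G) : ∃ (𝔅 : Multiset (Block C m)) (L : Multiset G),
      𝔅.bind Block.terms + L = S ∧ L.card ≤ C.index * (m - 1) := by
  induction hS : S.card using Nat.strong_induction_on generalizing S with
  | _ s ih =>
  rcases Nat.lt_or_ge (C.index * (m - 1)) S.card with hlt | hle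
  · obtain ⟨T, hT, hcard, q, hq⟩ := exists_le_card_eq_succ_forall_eq (QuotientAddGroup.mk' C) S hlt
    obtain ⟨b, rfl⟩ := exists_block_terms_eq hm (by lia) hq
    obtain ⟨R, rfl⟩ := Multiset.le_iff_exists_add.1 hT
    rw [Multiset.card_add] at hS
    obtain ⟨𝔅, L, rfl, hL⟩ := ih R.card (by lia) R rfl
    exact ⟨b ::ₘ 𝔅, L, by rw [Multiset.cons_bind, add_assoc], hL⟩
  · exact ⟨0, S, by rw [Multiset.zero_bind, zero_add], hle⟩

theorem exists_le_card_eq_mul_sum_eq_zero_of_nsmul_mem [Finite C] [IsAddCyclic C] [Finite (G ⧸ C)]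
    (hm : ∀ g : G, m • g ∈ C) (hm0 : 0 < m) {S : Multiset G}
    (hS : m * (2 * Nat.card C - 1) + C.index * (m - 1) ≤ S.card) :
    ∃ T ≤ S, T.card = m * Nat.card C ∧ T.sum = 0 := by
  obtain ⟨𝔅, L, rfl, hL⟩ := exists_bind_terms_add_eq hm hm0 S
  rw [Multiset.card_add, card_bind_terms] at hS
  obtain ⟨T, hT, hcard, hsum⟩ := exists_le_card_eq_card_sum_eq_zero (S := 𝔅.map Block.value)
    (by rw [Multiset.card_map]; exact Nat.le_of_mul_le_mul_left (by lia) hm0)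
  obtain ⟨𝔗, h𝔗, rfl⟩ := exists_le_map_eq _ hT
  rw [Multiset.card_map] at hcard
  exact ⟨𝔗.bind Block.terms, (bind_terms_mono h𝔗).trans (Multiset.le_add_right _ _),
    by rw [card_bind_terms, hcard], by rw [sum_bind_terms, hsum, AddSubgroup.coe_zero]⟩

/-- A sequence of blocks is optimal if no regrouping of its terms into blocks has fewer
nonconstant blocks. -/
def IsOptimal (𝔅 : Multiset (Block C m)) : Prop :=
  ∀ 𝔅' : Multiset (Block C m), 𝔅'.bind Block.terms = 𝔅.bind Block.terms →
    (𝔅.filter fun b => ¬b.IsConst).card ≤ (𝔅'.filter fun b => ¬b.IsConst).card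

theorem exists_isOptimal (𝔅 : Multiset (Block C m)) :
    ∃ 𝔅' : Multiset (Block C m),
      IsOptimal 𝔅' ∧ 𝔅'.bind Block.terms = 𝔅.bind Block.terms := by
  have hex := exists_minimalFor_of_wellFoundedLT
    (fun 𝔅' : Multiset (Block C m) => 𝔅'.bind Block.terms = 𝔅.bind Block.terms)
    (fun 𝔅' : Multiset (Block C m) => (𝔅'.filter fun b => ¬b.IsConst).card) ⟨𝔅, rfl⟩
  obtain ⟨𝔅', h𝔅', hmin⟩ := hex
  exact ⟨𝔅', fun 𝔅'' h => (le_total _ _).elim id (hmin (h.trans h𝔅')), h𝔅'⟩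

theorem IsOptimal.count_le (hm : ∀ g : G, m • g ∈ C) {b b' : Block C m}
    {𝔅 : Multiset (Block C m)} (h𝔅 : IsOptimal (b ::ₘ b' ::ₘ 𝔅)) (hb : ¬b.IsConst)
    (hb' : ¬b'.IsConst) (hcoset : b.coset = b'.coset) (g : G) :
    (b.terms + b'.terms).count g ≤ m := by
  by_contra! hlt
  obtain ⟨Y, hY⟩ := Multiset.le_iff_exists_add.1 (Multiset.le_count_iff_replicate_le.1 hlt.le)
  have hq : ∀ x ∈ Multiset.replicate m g + Y, (x : G ⧸ C) = b.coset := fun x hx =>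
    (Multiset.mem_add.1 (hY ▸ hx)).elim (b.mk_eq x) fun hx => hcoset ▸ b'.mk_eq x hx
  have hYcard := congrArg Multiset.card hY
  rw [Multiset.card_add, Multiset.card_add, b.card_terms, b'.card_terms,
    Multiset.card_replicate] at hYcard
  obtain ⟨d, hd⟩ := exists_block_terms_eq hm (Multiset.card_replicate m g) fun x hx =>
    hq x (Multiset.mem_add.2 (Or.inl hx))
  obtain ⟨e, rfl⟩ := exists_block_terms_eq hm (B := Y) (by lia) fun x hx =>
    hq x (Multiset.mem_add.2 (Or.inr hx))
  have hle := h𝔅 (d ::ₘ e ::ₘ 𝔅) (by simp only [Multiset.cons_bind, ← add_assoc, hd, hY])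
  have hd' : d.IsConst := ⟨g, hd⟩
  simp only [Multiset.filter_cons, hb, hb', hd', not_true_eq_false, not_false_eq_true, if_true,
    if_false, Multiset.card_add, Multiset.card_singleton, zero_add] at hle
  split_ifs at hle <;> simp only [Multiset.card_singleton, Multiset.card_zero] at hle <;> lia

theorem exists_pairs_of_coset_eq (hm : ∀ g : G, m • g ∈ C) {b b' : Block C m}
    (hcoset : b.coset = b'.coset) (hcount : ∀ g, (b.terms + b'.terms).count g ≤ m) :
    ∃ P : Multiset (G × G), entries P = b.terms + b'.terms ∧
      (∀ p ∈ P, p.1 ≠ p.2 ∧ p.2 - p.1 ∈ C) ∧ (P.map Prod.fst).sum ∈ C := by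
  have hcard : (b.terms + b'.terms).card = 2 * m := by
    rw [Multiset.card_add, b.card_terms, b'.card_terms, two_mul]
  obtain ⟨P, hP, hne⟩ := exists_entries_eq_forall_ne hcard hcount
  have hq : ∀ x ∈ entries P, (x : G ⧸ C) = b.coset := fun x hx =>
    (Multiset.mem_add.1 (hP ▸ hx)).elim (b.mk_eq x) fun hx => hcoset ▸ b'.mk_eq x hx
  have hfst : ∀ p ∈ P, (p.1 : G ⧸ C) = b.coset := fun p hp =>
    hq _ (mem_entries.2 ⟨p, hp, Or.inl rfl⟩)
  refine ⟨P, hP, fun p hp => ⟨hne p hp, ?_⟩, sum_mem_of_mk_eq hm (q := b.coset) ?_ ?_⟩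
  · rw [← QuotientAddGroup.eq_zero_iff, QuotientAddGroup.mk_sub, hfst p hp,
      hq _ (mem_entries.2 ⟨p, hp, Or.inr rfl⟩), sub_self]
  · have := card_entries P
    rw [Multiset.card_map]
    lia
  · simpa using hfst

theorem exists_pairs_of_forall_coset_eq (hm : ∀ g : G, m • g ∈ C)
    {𝔓 : Multiset (Block C m × Block C m)}
    (h : ∀ p ∈ 𝔓, p.1.coset = p.2.coset ∧ ∀ g, (p.1.terms + p.2.terms).count g ≤ m) :
    ∃ P : Multiset (G × G), entries P = (entries 𝔓).bind Block.terms ∧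
      (∀ p ∈ P, p.1 ≠ p.2 ∧ p.2 - p.1 ∈ C) ∧ (P.map Prod.fst).sum ∈ C := by
  induction 𝔓 using Multiset.induction_on with
  | empty => exact ⟨0, by simp⟩
  | cons p 𝔓 ih =>
    obtain ⟨P, hP, hne, hsum⟩ := ih fun q hq => h q (Multiset.mem_cons_of_mem hq)
    obtain ⟨hcoset, hcount⟩ := h p (Multiset.mem_cons_self p 𝔓)
    obtain ⟨P', hP', hne', hsum'⟩ := exists_pairs_of_coset_eq hm hcoset hcount
    refine ⟨P' + P, ?_, fun q hq => (Multiset.mem_add.1 hq).elim (hne' q) (hne q), ?_⟩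
    · simp only [entries_add, entries_cons, Multiset.cons_bind, hP', hP, add_assoc]
    · rw [Multiset.map_add, Multiset.sum_add]
      exact C.add_mem hsum' hsum

end Blocks

section Covering

variable {C : Type*} [AddCommGroup C]

theorem card_add_one_le_card_subsetSums [Finite C] {A : Finset C} (hA : A.Nonempty) {E : Multiset C}
    (hE : ∀ x ∈ E, x ≠ 0) (hb : stabilizer C (subsetSums A E) = ⊥) :
    E.card + 1 ≤ (subsetSums A E).card := by
  have hK := mul_card_filter_le_card_subsetSums hA E hb
  rwa [Multiset.filter_eq_self.2 fun x hx => AddSubgroup.mem_bot.not.2 (hE x hx),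
    AddSubgroup.card_bot, one_mul] at hK

theorem IsSpread.subsetSums_add_map_sub_eq_univ [Fintype C] {D Δ : Multiset C} {c : C} {a : ℕ}
    (hspread : IsSpread (Multiset.replicate a c + D)) (hD : ∀ x ∈ D, x ≠ c) (hΔ : ∀ x ∈ Δ, x ≠ 0)
    (hcard : Nat.card C ≤ Δ.card + D.card) :
    subsetSums {0} (Δ + D.map (· - c)) = Finset.univ := by
  obtain ⟨Q, hQ⟩ : ∃ Q, stabilizer C (subsetSums {0} (Δ + D.map (· - c))) = Q := ⟨_, rfl⟩
  obtain rfl | hb := eq_or_ne Q ⊥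
  · have hne : ∀ x ∈ Δ + D.map (· - c), x ≠ 0 := by
      intro x hx
      obtain hx | hx := Multiset.mem_add.1 hx
      · exact hΔ x hx
      · obtain ⟨z, hz, rfl⟩ := Multiset.mem_map.1 hx
        exact sub_ne_zero.2 (hD z hz)
    have hK := card_add_one_le_card_subsetSums (Finset.singleton_nonempty 0) hne hQ
    have := Finset.card_le_univ (subsetSums {0} (Δ + D.map (· - c)))
    rw [Multiset.card_add, Multiset.card_map] at hK
    rw [← Nat.card_eq_fintype_card] at this
    lia
  · refine hspread.subsetSums_eq_univ (c := c) (Finset.singleton_nonempty 0) hQ hb ?_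
    rw [Multiset.filter_add, Multiset.filter_eq_nil.2 fun z hz => ?_, zero_add, Multiset.filter_add,
      Multiset.card_add, Multiset.filter_map, Multiset.card_map]
    · exact Nat.le_add_left _ _
    · rw [Multiset.eq_of_mem_replicate hz, sub_self]
      exact not_not.2 Q.zero_mem

theorem exists_le_subsetSums_eq_univ [Fintype C] {Δ E : Multiset C} (hΔ : ∀ x ∈ Δ, x ≠ 0)
    (hcard : 2 * Δ.card ≤ Nat.card C) (hu : subsetSums {0} (Δ + E) = Finset.univ) :
    ∃ E' ≤ E, subsetSums (subsetSums {0} Δ) E' = Finset.univ ∧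
      E'.card + Δ.card ≤ Nat.card C := by
  rw [subsetSums_add] at hu
  obtain ⟨Q, hQ⟩ : ∃ Q, stabilizer C (subsetSums {0} Δ) = Q := ⟨_, rfl⟩
  obtain ⟨E', hE', hsum, hle⟩ := exists_le_subsetSums_eq hQ.ge E
  refine ⟨E', hE', hsum.trans hu, ?_⟩
  rw [hu, Finset.card_univ, ← Nat.card_eq_fintype_card] at hle
  obtain rfl | hb := eq_or_ne Q ⊥
  · have hK := card_add_one_le_card_subsetSums (Finset.singleton_nonempty 0) hΔ hQ
    rw [AddSubgroup.card_bot] at hle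
    lia
  · have hQcard := AddSubgroup.one_lt_card_iff_ne_bot Q |>.2 hb
    have := Nat.mul_le_mul_right E'.card (Nat.succ_le_of_lt hQcard)
    lia

theorem IsSpread.exists_le_card_eq_sum_add_sum_eq [Finite C] [DecidableEq C]
    {Z Δ : Multiset C} {c : C} {s r : ℕ}
    (hspread : IsSpread (Multiset.replicate s c + Z)) (hΔ : ∀ x ∈ Δ, x ≠ 0)
    (hΔcard : 2 * Δ.card ≤ Nat.card C) (hc : Nat.card C ≤ Δ.card + Z.count c)
    (hZ : Z.count c + Nat.card C ≤ Δ.card + Z.card) (hr : Nat.card C ≤ Δ.card + r)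
    (hrZ : r + Nat.card C ≤ Δ.card + Z.card) (τ : C) :
    ∃ F ≤ Δ, ∃ T ≤ Z, T.card = r ∧ T.sum + F.sum = τ := by
  cases nonempty_fintype C
  have hsplit := replicate_count_add_filter_ne Z c
  have hsplitcard := congrArg Multiset.card hsplit
  rw [Multiset.card_add, Multiset.card_replicate] at hsplitcard
  rw [← hsplit, ← add_assoc, ← Multiset.replicate_add] at hspread
  have hu := hspread.subsetSums_add_map_sub_eq_univ
    (fun x hx => (Multiset.mem_filter.1 hx).2) hΔ (by lia)
  obtain ⟨E, hE, hEu, hEcard⟩ := exists_le_subsetSums_eq_univ hΔ hΔcard hu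
  obtain ⟨X, hX, rfl⟩ := exists_le_map_eq _ hE
  rw [Multiset.card_map] at hEcard
  have hP : entries (X.map fun x => (c, x)) ≤ Z := by
    rw [entries_map_prodMk, ← hsplit]
    exact add_le_add (Multiset.replicate_mono c (by lia)) hX
  obtain ⟨δ, hδ, T, hT, hTcard, hTsum⟩ := exists_le_card_eq_sum_eq hP (r := r) (τ := τ)
    (by rw [Multiset.card_map]; lia) (by rw [Multiset.card_map]; lia)
    fun x => by rw [diffs_map_prodMk, hEu]; exact Finset.mem_univ x
  obtain ⟨a, ha, F, hF, rfl⟩ := mem_subsetSums.1 hδ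
  rw [Finset.mem_singleton.1 ha, zero_add] at hTsum
  exact ⟨F, hF, T, hT, hTcard, hTsum⟩

theorem IsCritical.count_lt [DecidableEq C] {Z : Multiset C} {l : ℕ} (hZ : IsCritical Z l) (c : C) :
    Z.count c < 2 * Nat.card C := by
  by_contra! h
  refine hZ.sum_ne_zero _ (Multiset.le_count_iff_replicate_le.1 h) (Multiset.card_replicate _ _) ?_
  rw [Multiset.sum_replicate, mul_nsmul', card_nsmul_eq_zero', nsmul_zero]

end Covering

section NoConstantBlock

variable {G : Type*} [AddCommGroup G] {C : AddSubgroup G} {m : ℕ}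

theorem IsOptimal.exists_pairs [Finite (G ⧸ C)] (hm : ∀ g : G, m • g ∈ C)
    {𝔅 𝔘 : Multiset (Block C m)} (h𝔅 : IsOptimal 𝔅) (h𝔘 : 𝔘 ≤ 𝔅) (hconst : ∀ b ∈ 𝔘, ¬b.IsConst)
    {h : ℕ} (hcard : C.index + 2 * h ≤ 𝔘.card) :
    ∃ 𝔙 ≤ 𝔘, 𝔙.card = 2 * h ∧ ∃ P : Multiset (G × G), entries P = 𝔙.bind Block.terms ∧
      (∀ p ∈ P, p.1 ≠ p.2 ∧ p.2 - p.1 ∈ C) ∧ (P.map Prod.fst).sum ∈ C := by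
  obtain ⟨𝔓, h𝔓card, h𝔓, hcoset⟩ := exists_entries_le_forall_eq Block.coset hcard
  refine ⟨entries 𝔓, h𝔓, by rw [card_entries, h𝔓card], ?_⟩
  refine exists_pairs_of_forall_coset_eq hm fun p hp => ⟨hcoset p hp, ?_⟩
  have hconst' : ∀ b ∈ entries 𝔓, ¬b.IsConst := fun b hb => hconst b (Multiset.mem_of_le h𝔓 hb)
  obtain ⟨R, rfl⟩ := Multiset.le_iff_exists_add.1 (h𝔓.trans h𝔘)
  obtain ⟨𝔓, rfl⟩ := Multiset.exists_cons_of_mem hp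
  rw [entries_cons, Multiset.cons_add, Multiset.cons_add] at h𝔅
  rw [entries_cons] at hconst'
  exact h𝔅.count_le hm (hconst' _ (by simp)) (hconst' _ (by simp)) (hcoset p hp)

theorem exists_map_coe_eq_diffs {P : Multiset (G × G)} (hP : ∀ p ∈ P, p.1 ≠ p.2 ∧ p.2 - p.1 ∈ C) :
    ∃ Δ : Multiset C, Δ.map (fun x : C => (x : G)) = diffs P ∧ ∀ x ∈ Δ, x ≠ 0 := by
  have hmem : ∀ x ∈ diffs P, x ∈ C := fun x hx => by
    obtain ⟨p, hp, rfl⟩ := Multiset.mem_map.1 hx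
    exact (hP p hp).2
  have hne : ∀ x ∈ diffs P, x ≠ 0 := fun x hx => by
    obtain ⟨p, hp, rfl⟩ := Multiset.mem_map.1 hx
    exact sub_ne_zero.2 (hP p hp).1.symm
  lift diffs P to Multiset C using hmem with Δ
  exact ⟨Δ, rfl, fun x hx hx0 => hne x (Multiset.mem_map_of_mem _ hx) (by rw [hx0]; rfl)⟩

theorem exists_le_entries_sum_add_bind_terms_eq_zero {P : Multiset (G × G)} {Δ F : Multiset C}
    (hΔ : Δ.map (fun x : C => (x : G)) = diffs P) (hF : F ≤ Δ) (hP : (P.map Prod.fst).sum ∈ C)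
    {𝔗 : Multiset (Block C m)} (h𝔗 : (𝔗.map Block.value).sum + F.sum = -⟨_, hP⟩) :
    ∃ U ≤ entries P, U.card = P.card ∧ (U + 𝔗.bind Block.terms).sum = 0 := by
  obtain ⟨F', hF', hF'map⟩ := exists_le_map_eq (fun p : G × G => p.2 - p.1)
    (hΔ ▸ Multiset.map_le_map hF : F.map (fun x : C => (x : G)) ≤ diffs P)
  obtain ⟨U, hU, hUcard, hUsum⟩ := exists_le_entries_sum_eq hF'
  refine ⟨U, hU, hUcard, ?_⟩
  have hFsum : ((F.sum : C) : G) = (diffs F').sum := by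
    rw [AddSubgroup.val_multiset_sum, ← hF'map]
    rfl
  have hsum := congrArg (fun x : C => (x : G)) (eq_neg_iff_add_eq_zero.1 h𝔗)
  simp only [AddSubgroup.coe_add, AddSubgroup.coe_zero] at hsum
  rw [Multiset.sum_add, sum_bind_terms, hUsum, ← hFsum, ← hsum]
  abel

theorem map_value_eq_replicate {𝔅 : Multiset (Block C m)} {c : C} (h : ∀ b ∈ 𝔅, b.value = c) :
    𝔅.map Block.value = Multiset.replicate 𝔅.card c :=
  Multiset.eq_replicate.2 ⟨Multiset.card_map _ _, fun _ hx => by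
    obtain ⟨b, hb, rfl⟩ := Multiset.mem_map.1 hx
    exact h b hb⟩

theorem IsOptimal.exists_le_card_eq_sum_eq_zero [Finite C] [IsAddCyclic C] [Finite (G ⧸ C)]
    (hm : ∀ g : G, m • g ∈ C) {𝔅 : Multiset (Block C m)} (h𝔅 : IsOptimal 𝔅) {l h : ℕ}
    (hcrit : IsCritical (𝔅.map Block.value) l) {c : C}
    (hc : Nat.card C ≤ (𝔅.map Block.value).count c) (hconst : ∀ b ∈ 𝔅, b.value = c → ¬b.IsConst)
    (hindex : C.index = m * h) (hm2 : 2 ≤ m) (hn : 2 * (m * h) + 2 * h ≤ Nat.card C)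
    (hl : Nat.card C + h ≤ l + m * h) :
    ∃ T ≤ 𝔅.bind Block.terms, T.card = 2 * (m * Nat.card C) ∧ T.sum = 0 := by
  have hmh : 2 * h ≤ m * h := Nat.mul_le_mul_right h hm2
  have hclt := hcrit.count_lt c
  have hfilter : ∀ b ∈ 𝔅.filter fun b => c = b.value, b.value = c := fun b hb =>
    (Multiset.mem_filter.1 hb).2.symm
  have hcount : C.index + 2 * h ≤ (𝔅.filter fun b => c = b.value).card := by
    rw [← Multiset.count_map]
    lia
  obtain ⟨𝔙, h𝔙, h𝔙card, P, hP, hPne, hPsum⟩ := h𝔅.exists_pairs hm (Multiset.filter_le _ 𝔅)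
    (fun b hb => hconst b (Multiset.mem_of_mem_filter hb) (hfilter b hb)) hcount
  have hvalue := map_value_eq_replicate fun b hb => hfilter b (Multiset.mem_of_le h𝔙 hb)
  obtain ⟨𝔚, rfl⟩ := Multiset.le_iff_exists_add.1 (h𝔙.trans (Multiset.filter_le _ 𝔅))
  have hPcard := card_entries P
  rw [hP, card_bind_terms, h𝔙card, mul_left_comm] at hPcard
  obtain ⟨Δ, hΔ, hΔne⟩ := exists_map_coe_eq_diffs hPne
  have hΔcard := congrArg Multiset.card hΔ
  rw [Multiset.card_map, diffs, Multiset.card_map] at hΔcard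
  have hcard := hcrit.card_eq
  have hspread := hcrit.isSpread
  have := hcrit.add_two_le
  rw [Multiset.map_add, hvalue, h𝔙card] at hspread hcard hc hclt
  rw [Multiset.card_add, Multiset.card_replicate] at hcard
  rw [Multiset.count_add, Multiset.count_replicate_self] at hc hclt
  obtain ⟨F, hF, T, hT, hTcard, hTsum⟩ := hspread.exists_le_card_eq_sum_add_sum_eq
    (r := 2 * Nat.card C - h) hΔne (by lia) (by lia) (by lia) (by lia) (by lia) (-⟨_, hPsum⟩)
  obtain ⟨𝔗, h𝔗, rfl⟩ := exists_le_map_eq _ hT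
  rw [Multiset.card_map] at hTcard
  obtain ⟨U, hU, hUcard, hUsum⟩ := exists_le_entries_sum_add_bind_terms_eq_zero hΔ hF hPsum hTsum
  refine ⟨U + 𝔗.bind Block.terms, ?_, ?_, hUsum⟩
  · rw [Multiset.add_bind, ← hP]
    exact add_le_add hU (bind_terms_mono h𝔗)
  · rw [Multiset.card_add, card_bind_terms, hTcard, hUcard, (by lia : P.card = m * h), ← mul_add,
      Nat.add_sub_cancel' (by lia), mul_left_comm]

end NoConstantBlock

section ConstantBlock

theorem exists_mul_add_eq {N r j s : ℕ} (h : r ≤ N * j + s) (hs : N ≤ s) :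
    ∃ i ≤ j, ∃ t ≤ s, N * i + t = r := by
  obtain hj | hj := le_total (N * j) r
  · exact ⟨j, le_rfl, r - N * j, by lia, by lia⟩
  · obtain rfl | hN := N.eq_zero_or_pos
    · exact ⟨0, j.zero_le, r, by simpa using h, by simp⟩
    · exact ⟨r / N, Nat.div_le_of_le_mul hj, r % N, (Nat.mod_lt r hN).le.trans hs,
        Nat.div_add_mod r N⟩

variable {G : Type*} [AddCommGroup G] {C : AddSubgroup G} {m D : ℕ}

theorem exists_le_sum_eq_card_nsmul
    (hD : ∀ S : Multiset G, D ≤ S.card → ∃ T ≤ S, T ≠ 0 ∧ T.sum = 0) (W : Multiset G) (g : G) :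
    ∃ P ≤ W, P.sum = P.card • g ∧ W.card < P.card + D := by
  obtain ⟨P, ⟨hP, hsum⟩, hmax⟩ := ((Set.finite_Iic W).subset fun P hP => hP.1 :
    {P | P ≤ W ∧ P.sum = P.card • g}.Finite).exists_maximal ⟨0, W.zero_le, by simp⟩
  refine ⟨P, hP, hsum, ?_⟩
  obtain ⟨R, rfl⟩ := Multiset.le_iff_exists_add.1 hP
  by_contra! hle
  obtain ⟨T, hT, hT0, hTsum⟩ := hD (R.map (· - g)) (by
    rw [Multiset.card_add] at hle
    rw [Multiset.card_map]
    lia)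
  obtain ⟨T, hTR, rfl⟩ := exists_le_map_eq _ hT
  rw [sum_map_sub_const, sub_eq_zero] at hTsum
  have hPT : P + T ≤ P := hmax ⟨add_le_add le_rfl hTR, by
    rw [Multiset.sum_add, hsum, hTsum, Multiset.card_add, add_nsmul]⟩ (Multiset.le_add_right _ _)
  refine hT0 (by rw [le_zero_iff.1 (le_of_add_le_add_left (hPT.trans_eq (add_zero P).symm)),
    Multiset.map_zero])

theorem exists_le_bind_terms_sum_eq_nsmul {𝔘 : Multiset (Block C m)} {a r : ℕ} {c : C}
    (h : 𝔘.map Block.value = Multiset.replicate a c) (hr : r ≤ a) :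
    ∃ T ≤ 𝔘.bind Block.terms, T.card = m * r ∧ T.sum = r • (c : G) := by
  obtain ⟨𝔗, h𝔗, h𝔗r⟩ := exists_le_map_eq Block.value (h ▸ Multiset.replicate_mono c hr)
  refine ⟨𝔗.bind Block.terms, bind_terms_mono h𝔗, ?_, ?_⟩
  · rw [card_bind_terms, ← Multiset.card_map Block.value, h𝔗r, Multiset.card_replicate]
  · rw [sum_bind_terms, h𝔗r, Multiset.sum_replicate, AddSubgroup.coe_nsmul]

theorem exists_le_card_eq_sum_eq_nsmul [Finite C] {𝔄 𝔍 : Multiset (Block C m)} {g : G} {c c' : C}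
    {a j : ℕ} (h𝔄 : 𝔄.map Block.value = Multiset.replicate a c)
    (h𝔍 : 𝔍.map Block.value = Multiset.replicate (Nat.card C * j) c') (hg : m • g = c)
    (ha : Nat.card C ≤ a + 1) {r : ℕ} (hr : r ≤ m * Nat.card C * j + (m * a + m)) :
    ∃ T ≤ Multiset.replicate m g + 𝔄.bind Block.terms + 𝔍.bind Block.terms,
      T.card = r ∧ T.sum = r • g := by
  have hcard (x : C) : Nat.card C • (x : G) = 0 := by
    rw [← AddSubgroup.coe_nsmul, card_nsmul_eq_zero', AddSubgroup.coe_zero]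
  obtain ⟨i, hi, t, ht, rfl⟩ := exists_mul_add_eq hr
    (by rw [← mul_add_one]; exact Nat.mul_le_mul_left m ha)
  obtain ⟨i', hi', i'', hi'', rfl⟩ := exists_mul_add_eq ht le_rfl
  obtain ⟨A, hA, hAcard, hAsum⟩ := exists_le_bind_terms_sum_eq_nsmul h𝔄 hi'
  obtain ⟨J, hJ, hJcard, hJsum⟩ := exists_le_bind_terms_sum_eq_nsmul h𝔍 (Nat.mul_le_mul_left _ hi)
  refine ⟨Multiset.replicate i'' g + A + J,
    add_le_add (add_le_add (Multiset.replicate_mono g hi'') hA) hJ, ?_, ?_⟩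
  · rw [Multiset.card_add, Multiset.card_add, Multiset.card_replicate, hAcard, hJcard]
    ring
  · rw [Multiset.sum_add, Multiset.sum_add, Multiset.sum_replicate, hAsum, hJsum, mul_nsmul, hcard,
      nsmul_zero, add_zero, add_nsmul, mul_assoc, mul_nsmul, hg, mul_nsmul _ (Nat.card C), hcard,
      nsmul_zero, zero_add, add_nsmul, mul_nsmul, hg, add_comm]

theorem exists_le_card_eq_sum_eq_zero_of_isConst [Finite C]
    (hD : ∀ S : Multiset G, D ≤ S.card → ∃ T ≤ S, T ≠ 0 ∧ T.sum = 0)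
    {𝔅 : Multiset (Block C m)} {L : Multiset G} {a j : ℕ} {c c' : C} {E : Multiset C}
    (h𝔅 : 𝔅.map Block.value =
      Multiset.replicate a c + Multiset.replicate (Nat.card C * j) c' + E)
    (ha : Nat.card C ≤ a) (hEL : m * E.card + L.card ≤ 2 * (m * Nat.card C))
    {b : Block C m} (hb : b ∈ 𝔅) (hbc : b.value = c) (hbconst : b.IsConst)
    (hcard : 2 * (m * Nat.card C) + D ≤ (𝔅.bind Block.terms + L).card + 1) :
    ∃ T ≤ 𝔅.bind Block.terms + L, T.card = 2 * (m * Nat.card C) ∧ T.sum = 0 := by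
  obtain ⟨g, hg⟩ := hbconst
  obtain ⟨a, rfl⟩ := Nat.exists_eq_add_one.2 (Nat.card_pos.trans_le ha)
  obtain ⟨𝔅, rfl⟩ := Multiset.exists_cons_of_mem hb
  rw [Multiset.map_cons, hbc, Multiset.replicate_succ, Multiset.cons_add, Multiset.cons_add,
    Multiset.cons_inj_right] at h𝔅
  obtain ⟨𝔛, 𝔈, rfl, h𝔛, rfl⟩ := exists_map_eq_of_map_eq_add h𝔅
  obtain ⟨𝔄, 𝔍, rfl, h𝔄, h𝔍⟩ := exists_map_eq_of_map_eq_add h𝔛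
  have h𝔄card := congrArg Multiset.card h𝔄
  have h𝔍card := congrArg Multiset.card h𝔍
  rw [Multiset.card_map, Multiset.card_replicate] at h𝔄card h𝔍card
  have hmg : m • g = c := by
    rw [← hbc, ← Multiset.sum_replicate, ← hg]
    rfl
  obtain ⟨P, hP, hPsum, hPcard⟩ := exists_le_sum_eq_card_nsmul hD (𝔈.bind Block.terms + L) g
  have hPle := Multiset.card_le_card hP
  rw [Multiset.card_map] at hEL
  simp only [Multiset.cons_bind, Multiset.add_bind, Multiset.card_add, card_bind_terms, h𝔄card,
    h𝔍card, b.card_terms] at hcard hPcard hPle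
  obtain ⟨T, hT, hTcard, hTsum⟩ := exists_le_card_eq_sum_eq_nsmul h𝔄 h𝔍 hmg ha
    (r := 2 * (m * Nat.card C) - P.card) (by lia)
  refine ⟨T + P, ?_, by rw [Multiset.card_add]; lia, ?_⟩
  · rw [Multiset.cons_bind, Multiset.add_bind, Multiset.add_bind, hg, ← add_assoc, ← add_assoc,
      add_assoc _ _ L]
    exact add_le_add hT hP
  · rw [Multiset.sum_add, hTsum, hPsum, ← add_nsmul, Nat.sub_add_cancel (by lia), mul_comm 2,
      mul_assoc, mul_nsmul, hmg, mul_comm, mul_nsmul', ← AddSubgroup.coe_nsmul,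
      card_nsmul_eq_zero', AddSubgroup.coe_zero, nsmul_zero]

end ConstantBlock

section CyclicExtension

variable {G : Type*} [AddCommGroup G] {C : AddSubgroup G} {m h D : ℕ}

theorem two_mul_index_mul_le (hindex : C.index = m * h)
    (hn : 2 * (m * h) + 2 * h ≤ Nat.card C) : 2 * (C.index * (m - 1)) ≤ m * Nat.card C :=
  calc 2 * (C.index * (m - 1)) ≤ 2 * (m * h * m) := by
        rw [hindex]
        exact Nat.mul_le_mul_left 2 (Nat.mul_le_mul_left _ (Nat.sub_le m 1))
    _ = m * (2 * (m * h)) := by ring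
    _ ≤ m * Nat.card C := Nat.mul_le_mul_left m (by lia)

theorem isCritical_map_value [Finite C] [IsAddCyclic C] {𝔅 : Multiset (Block C m)}
    (hlower : 3 * Nat.card C + h ≤ 𝔅.card + m * h) (hh : 0 < h)
    (hn : 2 * (m * h) + 2 * h ≤ Nat.card C)
    (hfree : ∀ T ≤ 𝔅.bind Block.terms, T.card = 2 * (m * Nat.card C) → T.sum ≠ 0) :
    IsCritical (𝔅.map Block.value) (𝔅.card - 2 * Nat.card C) := by
  have hne : ∀ T ≤ 𝔅.map Block.value, T.card = 2 * Nat.card C → T.sum ≠ 0 := by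
    intro T hT hcard hsum
    obtain ⟨𝔗, h𝔗, rfl⟩ := exists_le_map_eq _ hT
    rw [Multiset.card_map] at hcard
    exact hfree _ (bind_terms_mono h𝔗) (by rw [card_bind_terms, hcard, Nat.mul_left_comm])
      (by rw [sum_bind_terms, hsum, AddSubgroup.coe_zero])
  have hupper : 𝔅.card + 2 ≤ 3 * Nat.card C := by
    by_contra! hlt
    obtain ⟨T, hT, hcard, hsum⟩ := exists_le_card_eq_mul_card_sum_eq_zero
      (S := 𝔅.map Block.value) 2 (by rw [Multiset.card_map]; lia)
    exact hne T hT hcard hsum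
  exact ⟨by rw [Multiset.card_map]; lia, by lia, by lia, hne⟩

variable [Finite C] [IsAddCyclic C] [Finite (G ⧸ C)]

theorem exists_le_card_eq_two_mul_sum_eq_zero (hm : ∀ g : G, m • g ∈ C)
    (hD : ∀ S : Multiset G, D ≤ S.card → ∃ T ≤ S, T ≠ 0 ∧ T.sum = 0)
    (hDlower : m * Nat.card C + 1 ≤ D) (hindex : C.index = m * h) (hm2 : 2 ≤ m)
    (hn : 2 * (m * h) + 2 * h ≤ Nat.card C) (S : Multiset G)
    (hS : 2 * (m * Nat.card C) + D ≤ S.card + 1) :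
    ∃ T ≤ S, T.card = 2 * (m * Nat.card C) ∧ T.sum = 0 := by
  obtain ⟨𝔅, L, rfl, hL⟩ := exists_bind_terms_add_eq hm (by lia) S
  obtain ⟨𝔅, h𝔅, hbind⟩ := exists_isOptimal 𝔅
  rw [← hbind] at hS ⊢
  by_contra! hfree
  have hh : 0 < h := Nat.pos_of_mul_pos_left (hindex ▸ C.index_ne_zero_of_finite.bot_lt)
  have hlower : 3 * Nat.card C + h ≤ 𝔅.card + m * h := by
    rw [Multiset.card_add, card_bind_terms] at hS
    obtain ⟨m, rfl⟩ := Nat.exists_eq_add_one.2 (show 0 < m by lia)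
    rw [hindex, Nat.add_sub_cancel] at hL
    nlinarith
  have hcrit := isCritical_map_value hlower hh hn
    fun T hT => hfree T (hT.trans (Multiset.le_add_right _ _))
  obtain ⟨c, c', a, j, E, ha, hE, hZ⟩ := hcrit.exists_eq_replicate_add_replicate_add
  have hnot : ∀ b ∈ 𝔅, b.value = c → ¬b.IsConst := by
    intro b hb hbc hconst
    obtain ⟨T, hT, hcard, hsum⟩ := exists_le_card_eq_sum_eq_zero_of_isConst hD hZ ha
      (by nlinarith [two_mul_index_mul_le hindex hn]) hb hbc hconst hS
    exact hfree T hT hcard hsum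
  obtain ⟨T, hT, hcard, hsum⟩ := h𝔅.exists_le_card_eq_sum_eq_zero hm hcrit (c := c)
    (by rw [hZ]; simp only [Multiset.count_add, Multiset.count_replicate_self]; lia)
    hnot hindex hm2 hn (by lia)
  exact hfree T (hT.trans (Multiset.le_add_right _ _)) hcard hsum

theorem exists_le_card_eq_mul_sum_eq_zero (hm : ∀ g : G, m • g ∈ C)
    (hD : ∀ S : Multiset G, D ≤ S.card → ∃ T ≤ S, T ≠ 0 ∧ T.sum = 0)
    (hDlower : m * Nat.card C + 1 ≤ D) (hindex : C.index = m * h) (hm2 : 2 ≤ m)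
    (hn : 2 * (m * h) + 2 * h ≤ Nat.card C) {k : ℕ} (hk : 2 ≤ k) (S : Multiset G)
    (hS : k * (m * Nat.card C) + D ≤ S.card + 1) :
    ∃ T ≤ S, T.card = k * (m * Nat.card C) ∧ T.sum = 0 := by
  induction k, hk using Nat.le_induction generalizing S with
  | base => exact exists_le_card_eq_two_mul_sum_eq_zero hm hD hDlower hindex hm2 hn S hS
  | succ k hk ih =>
    have hlarge : m * (2 * Nat.card C - 1) + C.index * (m - 1) ≤ S.card := by
      have hleft := two_mul_index_mul_le hindex hn
      have hmul : m * (2 * Nat.card C - 1) ≤ m * (2 * Nat.card C) :=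
        Nat.mul_le_mul_left m (Nat.sub_le _ 1)
      nlinarith
    obtain ⟨T, hT, hTcard, hTsum⟩ :=
      exists_le_card_eq_mul_sum_eq_zero_of_nsmul_mem hm (by lia) hlarge
    obtain ⟨R, rfl⟩ := Multiset.le_iff_exists_add.1 hT
    rw [Multiset.card_add, hTcard, add_one_mul] at hS
    obtain ⟨T', hT', hT'card, hT'sum⟩ := ih R (by lia)
    refine ⟨T + T', add_le_add le_rfl hT', ?_, ?_⟩
    · rw [Multiset.card_add, hTcard, hT'card, add_one_mul, add_comm]
    · rw [Multiset.sum_add, hTsum, hT'sum, add_zero]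

end CyclicExtension

section OneProduct

variable {G : Type*}

theorem isOneProdSeq_iff_prod_eq_one [CommGroup G] {T : Multiset G} :
    IsOneProdSeq T ↔ T.prod = 1 := by
  refine ⟨?_, fun h => ⟨T.toList, T.coe_toList, by rwa [Multiset.prod_toList]⟩⟩
  rintro ⟨l, rfl, h⟩
  rwa [Multiset.prod_coe]

theorem isOneProdSeq_of_cons_one [Group G] {T : Multiset G} (h : IsOneProdSeq (1 ::ₘ T)) :
    IsOneProdSeq T := by
  obtain ⟨l, hl, hprod⟩ := h
  obtain ⟨l₁, l₂, rfl⟩ := List.append_of_mem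
    (Multiset.mem_coe.1 (hl ▸ Multiset.mem_cons_self 1 T))
  refine ⟨l₁ ++ l₂, ?_, by simpa using hprod⟩
  rw [← Multiset.cons_inj_right 1, ← hl, Multiset.cons_coe, Multiset.coe_eq_coe]
  exact List.perm_middle.symm

theorem isOneProdSeq_of_add_replicate_one [Group G] {T : Multiset G} {r : ℕ}
    (h : IsOneProdSeq (T + Multiset.replicate r 1)) : IsOneProdSeq T := by
  induction r with
  | zero => simpa using h
  | succ r ih =>
    rw [Multiset.replicate_succ, Multiset.add_cons] at h
    exact ih (isOneProdSeq_of_cons_one h)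

theorem exists_le_isOneProdSeq_of_forall_dvd_card [Group G] {d l : ℕ} (hd : 0 < d)
    (h : ∀ S : Multiset G, l ≤ S.card → ∃ T ≤ S, T ≠ 0 ∧ d ∣ T.card ∧ IsOneProdSeq T)
    {S : Multiset G} (hS : l + 1 ≤ S.card + d) : ∃ T ≤ S, T ≠ 0 ∧ IsOneProdSeq T := by
  obtain ⟨T, hT, hT0, hdvd, hone⟩ := h (S + Multiset.replicate (d - 1) 1) (by
    rw [Multiset.card_add, Multiset.card_replicate]
    lia)
  obtain ⟨r, hr, hTr⟩ := Multiset.le_replicate_iff.1 (tsub_le_iff_left.2 hT)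
  have hdecomp : T ∩ S + Multiset.replicate r 1 = T := by
    rw [← hTr, add_comm, Multiset.sub_add_inter]
  refine ⟨T ∩ S, Multiset.inter_le_right, fun hzero => ?_,
    isOneProdSeq_of_add_replicate_one (hdecomp.symm ▸ hone)⟩
  have hle := Nat.le_of_dvd (Multiset.card_pos.2 hT0) hdvd
  rw [← hdecomp, hzero, zero_add, Multiset.card_replicate] at hle
  lia

theorem add_sub_one_mem_lowerBounds [Group G] {d D : ℕ} (hd : 0 < d)
    (hD : D ∈ lowerBounds {l : ℕ | ∀ S : Multiset G,
      l ≤ S.card → ∃ T, T ≤ S ∧ T ≠ 0 ∧ IsOneProdSeq T}) :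
    d + D - 1 ∈ lowerBounds {l : ℕ | ∀ S : Multiset G,
      l ≤ S.card → ∃ T, T ≤ S ∧ T ≠ 0 ∧ d ∣ T.card ∧ IsOneProdSeq T} := by
  intro l hl
  have hDl : D ≤ l + 1 - d := hD fun S hS =>
    exists_le_isOneProdSeq_of_forall_dvd_card hd hl (by lia)
  obtain ⟨T, hT, hT0, hdvd, -⟩ := hl (Multiset.replicate l 1) (Multiset.card_replicate l 1).ge
  have hdl := (Nat.le_of_dvd (Multiset.card_pos.2 hT0) hdvd).trans (Multiset.card_le_card hT)
  rw [Multiset.card_replicate] at hdl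
  lia

theorem eq_zero_of_le_cons_replicate {A B : Type*} [CommMonoid A] [CommMonoid B] {a : A} {b : B}
    (hb : b ≠ 1) {T : Multiset (A × B)}
    (hT : T ≤ (1, b) ::ₘ Multiset.replicate (orderOf a - 1) (a, 1)) (hprod : T.prod = 1) :
    T = 0 := by
  by_cases hmem : (1, b) ∈ T
  · obtain ⟨T, rfl⟩ := Multiset.exists_cons_of_mem hmem
    obtain ⟨r, -, rfl⟩ := Multiset.le_replicate_iff.1 ((Multiset.cons_le_cons_iff _).1 hT)
    exact absurd (by simpa using congrArg Prod.snd hprod) hb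
  · obtain ⟨r, hr, rfl⟩ := Multiset.le_replicate_iff.1 ((Multiset.le_cons_of_notMem hmem).1 hT)
    have hpow : a ^ r = 1 := by simpa using congrArg Prod.fst hprod
    obtain rfl | hr0 := r.eq_zero_or_pos
    · rfl
    · have := orderOf_le_of_pow_eq_one hr0 hpow
      lia

theorem orderOf_lt_of_forall_exists_prod_eq_one {A B : Type*} [CommMonoid A] [CommMonoid B]
    [Nontrivial B] {D : ℕ} (hD : ∀ S : Multiset (A × B), D ≤ S.card → ∃ T ≤ S, T ≠ 0 ∧ T.prod = 1)
    {a : A} (ha : IsOfFinOrder a) : orderOf a < D := by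
  obtain ⟨b, hb⟩ := exists_ne (1 : B)
  by_contra! hle
  obtain ⟨T, hT, hT0, hprod⟩ := hD ((1, b) ::ₘ Multiset.replicate (orderOf a - 1) (a, 1)) (by
    rwa [Multiset.card_cons, Multiset.card_replicate, Nat.sub_add_cancel ha.orderOf_pos])
  exact hT0 (eq_zero_of_le_cons_replicate hb hT hprod)

theorem exists_le_card_eq_mul_prod_eq_one [CommGroup G] {C : Subgroup G} [Finite C] [IsCyclic C]
    [Finite (G ⧸ C)] {m h D k : ℕ} (hm : ∀ g : G, g ^ m ∈ C)
    (hD : ∀ S : Multiset G, D ≤ S.card → ∃ T ≤ S, T ≠ 0 ∧ T.prod = 1)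
    (hDlower : m * Nat.card C + 1 ≤ D) (hindex : C.index = m * h) (hm2 : 2 ≤ m)
    (hn : 2 * (m * h) + 2 * h ≤ Nat.card C) (hk : 2 ≤ k) (S : Multiset G)
    (hS : k * (m * Nat.card C) + D ≤ S.card + 1) :
    ∃ T ≤ S, T.card = k * (m * Nat.card C) ∧ T.prod = 1 := by
  have hcyclic : IsAddCyclic (Subgroup.toAddSubgroup C) :=
    isAddCyclic_additive_iff.2 ‹IsCyclic C›
  have hfinite : Finite (Subgroup.toAddSubgroup C) := ‹Finite C›
  have hquot : Finite (Additive G ⧸ Subgroup.toAddSubgroup C) := ‹Finite (G ⧸ C)›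
  have hDadd : ∀ S : Multiset (Additive G), D ≤ S.card → ∃ T ≤ S, T ≠ 0 ∧ T.sum = 0 := by
    intro S hS
    obtain ⟨T, hT, hT0, hprod⟩ := hD (S.map Additive.toMul) (by rwa [Multiset.card_map])
    obtain ⟨T, hTS, rfl⟩ := exists_le_map_eq _ hT
    rw [← toMul_multiset_sum, toMul_eq_one] at hprod
    exact ⟨T, hTS, fun h => hT0 (by rw [h, Multiset.map_zero]), hprod⟩
  obtain ⟨T, hT, hcard, hsum⟩ := exists_le_card_eq_mul_sum_eq_zero
    (C := Subgroup.toAddSubgroup C) hm hDadd hDlower hindex hm2 hn hk (S.map Additive.ofMul)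
    (by rwa [Multiset.card_map])
  obtain ⟨T, hTS, rfl⟩ := exists_le_map_eq _ hT
  rw [← ofMul_multiset_prod, ofMul_eq_zero] at hsum
  exact ⟨T, hTS, by rwa [Multiset.card_map] at hcard, hsum⟩

end OneProduct

section CyclicProd

variable {H : Type*} [CommGroup H] {m n : ℕ}

theorem pow_mem_zpowers_ofAdd_natCast (hexp : ∀ y : H, y ^ m = 1) {N : ℕ}
    (g : Multiplicative (ZMod N) × H) :
    g ^ m ∈ Subgroup.zpowers (Multiplicative.ofAdd (m : ZMod N), (1 : H)) := by
  obtain ⟨x, y⟩ := g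
  obtain ⟨z, hz⟩ := ZMod.intCast_surjective x.toAdd
  refine Subgroup.mem_zpowers_iff.2 ⟨z, Prod.ext (Multiplicative.toAdd.injective ?_) ?_⟩
  · simp [← hz, mul_comm]
  · simp [hexp]

theorem card_zpowers_ofAdd_natCast (hm : 0 < m) (hn : 0 < n) :
    Nat.card (Subgroup.zpowers (Multiplicative.ofAdd (m : ZMod (m * n)), (1 : H))) = n := by
  rw [Nat.card_zpowers, Prod.orderOf_mk, orderOf_one, Nat.lcm_one_right,
    orderOf_ofAdd_eq_addOrderOf, ZMod.addOrderOf_coe _ (Nat.mul_pos hm hn).ne',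
    Nat.gcd_mul_right_left, Nat.mul_div_cancel_left _ hm]

theorem index_zpowers_ofAdd_natCast (hm : 0 < m) (hn : 0 < n) :
    (Subgroup.zpowers (Multiplicative.ofAdd (m : ZMod (m * n)), (1 : H))).index =
      m * Nat.card H := by
  have hmul := Subgroup.card_mul_index
    (Subgroup.zpowers (Multiplicative.ofAdd (m : ZMod (m * n)), (1 : H)))
  rw [card_zpowers_ofAdd_natCast hm hn, Nat.card_prod, Nat.card_congr Multiplicative.toAdd,
    Nat.card_zmod] at hmul
  exact Nat.eq_of_mul_eq_mul_left hn (hmul.trans (by ring))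

theorem lt_of_forall_exists_prod_eq_one [Nontrivial H] {N D : ℕ} (hN : 0 < N)
    (hD : ∀ S : Multiset (Multiplicative (ZMod N) × H), D ≤ S.card → ∃ T ≤ S, T ≠ 0 ∧ T.prod = 1) :
    N < D := by
  have : NeZero N := ⟨hN.ne'⟩
  have hord : orderOf (Multiplicative.ofAdd (1 : ZMod N)) = N := by
    rw [orderOf_ofAdd_eq_addOrderOf, ZMod.addOrderOf_one]
  exact hord ▸ orderOf_lt_of_forall_exists_prod_eq_one hD (isOfFinOrder_of_finite _)

theorem exists_le_card_eq_mul_mul_prod_eq_one [Finite H] [Nontrivial H]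
    (hexp : ∀ y : H, y ^ m = 1) (hm : 2 ≤ m) (hn : 2 * (m * Nat.card H) + 2 * Nat.card H ≤ n)
    {D k : ℕ} (hk : 2 ≤ k) (hD : ∀ S : Multiset (Multiplicative (ZMod (m * n)) × H),
      D ≤ S.card → ∃ T ≤ S, T ≠ 0 ∧ T.prod = 1)
    {S : Multiset (Multiplicative (ZMod (m * n)) × H)} (hS : k * m * n + D ≤ S.card + 1) :
    ∃ T ≤ S, T.card = k * m * n ∧ T.prod = 1 := by
  have hm0 : 0 < m := by lia
  have hn0 : 0 < n := (Nat.mul_pos two_pos Nat.card_pos).trans_le (le_of_add_le_right hn)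
  have : NeZero (m * n) := ⟨(Nat.mul_pos hm0 hn0).ne'⟩
  have hlower : m * n < D := lt_of_forall_exists_prod_eq_one (Nat.mul_pos hm0 hn0) hD
  have hcard := card_zpowers_ofAdd_natCast (H := H) hm0 hn0
  have hmain := exists_le_card_eq_mul_prod_eq_one (pow_mem_zpowers_ofAdd_natCast hexp) hD
    (by rwa [hcard]) (index_zpowers_ofAdd_natCast hm0 hn0) hm (by rwa [hcard]) hk S
  rw [hcard, ← mul_assoc] at hmain
  exact hmain hS

end CyclicProd

end ZeroSum

/-- Let `H` be a finite abelian group with exponent `m ≥ 2`, let `n ≥ 2m|H| + 2|H|`,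
and let `G = C_{mn} ⊕ H`.  Then for every `k ≥ 2`, `s_{kmnℕ}(G) = kmn + D(G) − 1`,
where `D` is the Davenport constant of `G`. -/
theorem stmt2 (H : Type*) [CommGroup H] [Fintype H] (m n : ℕ)
    (hexp : Monoid.exponent H = m) (hm : 2 ≤ m)
    (hn : 2 * m * Fintype.card H + 2 * Fintype.card H ≤ n)
    (k : ℕ) (hk : 2 ≤ k) (D : ℕ)
    (hD : IsLeast {ℓ : ℕ | ∀ S : Multiset (Multiplicative (ZMod (m * n)) × H),
        ℓ ≤ Multiset.card S → ∃ T, T ≤ S ∧ T ≠ 0 ∧ IsOneProdSeq T} D) :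
    IsLeast {ℓ : ℕ | ∀ S : Multiset (Multiplicative (ZMod (m * n)) × H),
        ℓ ≤ Multiset.card S →
          ∃ T, T ≤ S ∧ T ≠ 0 ∧ (k * m * n) ∣ Multiset.card T ∧ IsOneProdSeq T}
      (k * m * n + D - 1) := by
  have hkmn : 0 < k * m * n := Nat.mul_pos (Nat.mul_pos (by lia) (by lia))
    ((Nat.mul_pos two_pos Fintype.card_pos).trans_le (le_of_add_le_right hn))
  have : Nontrivial H := by
    rw [← not_subsingleton_iff_nontrivial, ← Monoid.exp_eq_one_iff]
    lia
  have hfree := hD.1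
  simp only [Set.mem_ofPred_eq, ZeroSum.isOneProdSeq_iff_prod_eq_one] at hfree
  refine ⟨fun S hS => ?_, ZeroSum.add_sub_one_mem_lowerBounds hkmn hD.2⟩
  obtain ⟨T, hT, hcard, hprod⟩ := ZeroSum.exists_le_card_eq_mul_mul_prod_eq_one
    (fun y => hexp ▸ Monoid.pow_exponent_eq_one y) hm
    (by rwa [← mul_assoc, Nat.card_eq_fintype_card]) hk hfree (Nat.sub_le_iff_le_add.1 hS)
  exact ⟨T, hT, Multiset.card_pos.1 (hcard ▸ hkmn), hcard.symm.dvd,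
    ZeroSum.isOneProdSeq_iff_prod_eq_one.2 hprod⟩
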